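/- arXiv:1206.3546 — 4 statements merged into one kernel-verified Lean document; each statement's English description precedes it below -/
import Mathlib

section
/- Let K be a UFD of characteristic p > 0, let A = K[x_1,…,x_n] be the polynomial algebra, B = K[x_1^p,…,x_n^p], and let f_1,…,f_m ∈ A with 1 ≤ m ≤ n. Set R_i = B[f_1,…,f_{i-1},f_{i+1},…,f_m] and, for i ≠ j, R_{ij} = B[f_1,…,f_m with f_i and f_j omitted]. Then the following three conditions are equivalent: (1) dgcd(f_1,…,f_m) is a unit of A (i.e., every common divisor of all m×m jacobian minors of f_1,…,f_m is invertible); (2) f_1,…,f_m form a p-basis over B of the ring of constants of some K-derivation of A; (3) for every i ∈ {1,…,m} and all b,c ∈ R_i with b ≠ 0 and gcd(b,c) a unit, the polynomial b·f_i + c is square-free and B-free, and moreover, if m > 1, then for all i ≠ j in {1,…,m} and all b_1,b_2,c_1,c_2 ∈ R_{ij} with b_1,b_2 ≠ 0, gcd(b_1,c_1) a unit and gcd(b_2,c_2) a unit, the polynomials b_1·f_i + c_1 and b_2·f_j + c_2 have unit gcd. -/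
open MvPolynomial

/-- The monomial `f₁^{α₁} ⋯ f_m^{α_m}` for a multi-index `α ∈ Ω_m` (all exponents `< p`). -/
def pMonomial {S : Type*} [CommRing S] {m p : ℕ} (f : Fin m → S) (α : Fin m → Fin p) : S :=
  ∏ i, f i ^ (α i : ℕ)

/-- `f₁, …, f_m` are `p`-independent over the subring `B`. -/
def pIndependent {S : Type*} [CommRing S] (B : Subring S) {m : ℕ} (p : ℕ) (f : Fin m → S) : Prop :=
  ∀ b : (Fin m → Fin p) → S, (∀ α, b α ∈ B) →
    ∑ α : Fin m → Fin p, b α * pMonomial f α = 0 → ∀ α, b α = 0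

/-- `f₁, …, f_m` form a `p`-basis of `R` over `B`. -/
def IsPBasis {S : Type*} [CommRing S] (B : Subring S) (R : Set S) {m : ℕ} (p : ℕ)
    (f : Fin m → S) : Prop :=
  (↑B ⊆ R) ∧ (∀ α : Fin m → Fin p, pMonomial f α ∈ R) ∧ pIndependent B p f ∧
    ∀ r ∈ R, ∃ b : (Fin m → Fin p) → S, (∀ α, b α ∈ B) ∧
      r = ∑ α : Fin m → Fin p, b α * pMonomial f α

/-- The jacobian determinant of `f₁,…,f_m` w.r.t. the variables `x_{j₁},…,x_{j_m}`. -/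
noncomputable def jacMinor {K : Type*} [CommRing K] {n m : ℕ} (f : Fin m → MvPolynomial (Fin n) K)
    (j : Fin m → Fin n) : MvPolynomial (Fin n) K :=
  (Matrix.of fun i l => pderiv (j l) (f i)).det

/-- The subring `B = K[x₁^p, …, x_n^p]` of `K[x₁,…,x_n]`. -/
noncomputable def pPowers (K : Type*) [CommRing K] (n p : ℕ) : Subring (MvPolynomial (Fin n) K) :=
  (Algebra.adjoin K (Set.range fun i : Fin n => (X i : MvPolynomial (Fin n) K) ^ p)).toSubring

/-- `R_i = B[f₁,…,f̂ᵢ,…,f_m]`. -/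
noncomputable def Ri (K : Type*) [CommRing K] {n m : ℕ} (p : ℕ) (f : Fin m → MvPolynomial (Fin n) K)
    (i : Fin m) : Subring (MvPolynomial (Fin n) K) :=
  Subring.closure (↑(pPowers K n p) ∪ (f '' {j | j ≠ i}))

/-- `R_{ij} = B[f₁,…,f̂ᵢ,…,f̂ⱼ,…,f_m]`. -/
noncomputable def Rij (K : Type*) [CommRing K] {n m : ℕ} (p : ℕ) (f : Fin m → MvPolynomial (Fin n) K)
    (i j : Fin m) : Subring (MvPolynomial (Fin n) K) :=
  Subring.closure (↑(pPowers K n p) ∪ (f '' {l | l ≠ i ∧ l ≠ j}))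

/-- An element is `B`-free if it has no noninvertible factor from `B`. -/
def BFree {S : Type*} [CommRing S] (B : Subring S) (a : S) : Prop :=
  ∀ b ∈ B, b ∣ a → IsUnit b

/-- `C_B(f₁,…,f_m) = B₀(f₁,…,f_m) ∩ A`: those elements of `A` lying in the field of
fractions of `B[f₁,…,f_m]`. -/
def CB {S : Type*} [CommRing S] (B : Subring S) {m : ℕ} (f : Fin m → S) : Set S :=
  {a | ∃ s t : S, s ∈ Subring.closure (↑B ∪ Set.range f) ∧
      t ∈ Subring.closure (↑B ∪ Set.range f) ∧ s ≠ 0 ∧ a * s = t}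

/-- A `B`-derivation of `A`: additive, Leibniz rule, vanishing on `B`. -/
def IsBDerivation {S : Type*} [CommRing S] (B : Subring S) (d : S → S) : Prop :=
  (∀ x y, d (x + y) = d x + d y) ∧ (∀ x y, d (x * y) = x * d y + y * d x) ∧ ∀ b ∈ B, d b = 0

namespace PB
section basics
variable {K : Type*} [CommRing K] {n p : ℕ}

theorem C_mem (a : K) : (C a : MvPolynomial (Fin n) K) ∈ pPowers K n p :=
  (Algebra.adjoin K _).algebraMap_mem a

theorem X_pow_mem (i : Fin n) : (X i : MvPolynomial (Fin n) K) ^ p ∈ pPowers K n p :=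
  Algebra.subset_adjoin ⟨i, rfl⟩

theorem pow_mem' [hp : Fact p.Prime] [CharP K p] (a : MvPolynomial (Fin n) K) :
    a ^ p ∈ pPowers K n p := by
  induction a using MvPolynomial.induction_on with
  | C a => rw [← C_pow]; exact C_mem _
  | add a b ha hb => rw [add_pow_char]; exact add_mem ha hb
  | mul_X a i ha => rw [mul_pow]; exact mul_mem ha (X_pow_mem i)

theorem der_eq_zero [CharP K p] {M : Type*} [AddCommGroup M] [Module K M]
    [Module (MvPolynomial (Fin n) K) M] [IsScalarTower K (MvPolynomial (Fin n) K) M]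
    (D : Derivation K (MvPolynomial (Fin n) K) M)
    {b : MvPolynomial (Fin n) K} (hb : b ∈ pPowers K n p) : D b = 0 := by
  have hb' : b ∈ Algebra.adjoin K (Set.range fun i : Fin n => (X i : MvPolynomial (Fin n) K) ^ p) := hb
  have := Derivation.eqOn_adjoin (D1 := D) (D2 := 0)
    (s := Set.range fun i : Fin n => (X i : MvPolynomial (Fin n) K) ^ p) (by
      rintro _ ⟨i, rfl⟩
      simp only [Derivation.leibniz_pow, Derivation.zero_apply]
      rw [← Nat.cast_smul_eq_nsmul (MvPolynomial (Fin n) K) p (_ • D (X i)), CharP.cast_eq_zero,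
        zero_smul]
      simp)
  simpa using this hb'

theorem monomial_mem [NeZero p] (e : Fin n →₀ ℕ) (he : ∀ i, p ∣ e i) (a : K) :
    monomial e a ∈ pPowers K n p := by
  rw [monomial_eq]
  refine mul_mem (C_mem _) ?_
  rw [Finsupp.prod_fintype _ _ (by simp)]
  refine prod_mem fun i _ => ?_
  obtain ⟨k, hk⟩ := he i
  rw [hk, pow_mul]
  exact pow_mem (X_pow_mem i) k

theorem mem_of_pderiv [IsDomain K] [hp : Fact p.Prime] [CharP K p] {a : MvPolynomial (Fin n) K}
    (h : ∀ i, pderiv i a = 0) : a ∈ pPowers K n p := by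
  rw [a.as_sum]
  refine sum_mem fun e he => ?_
  have : NeZero p := ⟨hp.out.ne_zero⟩
  refine monomial_mem e (fun i => ?_) _
  by_cases h0 : e i = 0
  · simp [h0]
  have h1 := congrArg (coeff (e - Finsupp.single i 1)) (h i)
  rw [coeff_pderiv] at h1
  have h2 : e - Finsupp.single i 1 + Finsupp.single i 1 = e := by
    ext k
    by_cases hk : k = i
    · subst hk; simp; omega
    · simp [Ne.symm hk]
  rw [h2] at h1
  simp only [coeff_zero, mul_eq_zero] at h1
  rcases h1 with h1 | h1
  · exact absurd h1 (mem_support_iff.mp he)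
  · rw [← CharP.cast_eq_zero_iff K p]
    have : e i = (e i - 1) + 1 := by omega
    rw [this]; push_cast; simpa using h1

theorem mem_of_mul_mem [IsDomain K] [hp : Fact p.Prime] [CharP K p] {g a : MvPolynomial (Fin n) K}
    (hg : g ∈ pPowers K n p) (hg0 : g ≠ 0) (h : g * a ∈ pPowers K n p) : a ∈ pPowers K n p := by
  refine mem_of_pderiv (p := p) fun i => ?_
  have h1 := der_eq_zero (pderiv i) h
  rw [Derivation.leibniz, der_eq_zero (pderiv i) hg] at h1
  simpa [hg0] using h1

theorem not_dvd_pderiv [IsDomain K] {q : MvPolynomial (Fin n) K} (i : Fin n)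
    (hi : pderiv i q ≠ 0) : ¬ q ∣ pderiv i q := by
  rintro ⟨u, hu⟩
  have hq : q ≠ 0 := by rintro rfl; simp at hi
  have hu0 : u ≠ 0 := by rintro rfl; simp at hu; exact hi hu
  have h1 := totalDegree_mul_of_isDomain hq hu0
  rw [← hu] at h1
  have h2 : (pderiv i q).totalDegree + 1 ≤ q.totalDegree := by
    obtain ⟨e, he, hd⟩ := Finset.exists_mem_eq_sup (pderiv i q).support
      (by simpa using hi) (fun s => s.sum fun _ e => e)
    have h3 : (pderiv i q).totalDegree = e.sum fun _ e => e := hd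
    rw [h3]
    rw [mem_support_iff, coeff_pderiv] at he
    have h4 : e + Finsupp.single i 1 ∈ q.support := by
      rw [mem_support_iff]; exact left_ne_zero_of_mul he
    refine le_trans (le_of_eq ?_) (le_totalDegree h4)
    rw [Finsupp.sum_add_index' (by simp) (by simp)]
    simp
  omega

theorem natCast_isUnit [IsDomain K] [hp : Fact p.Prime] [CharP K p] {e : ℕ} (he : ¬ p ∣ e) :
    IsUnit (e : MvPolynomial (Fin n) K) := by
  have h : IsUnit (e : ZMod p) := (ZMod.isUnit_iff_coprime e p).mpr
    ((Nat.Prime.coprime_iff_not_dvd hp.out).mpr he).symm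
  have := h.map (ZMod.castHom dvd_rfl (MvPolynomial (Fin n) K))
  simpa using this

theorem exists_pow_dvd [IsDomain K] [UniqueFactorizationMonoid K] [hp : Fact p.Prime] [CharP K p]
    {q s : MvPolynomial (Fin n) K} (hq : Prime q) (hs : s ∈ pPowers K n p) (hs0 : s ≠ 0)
    (hqs : q ∣ s) : ∃ k, k ≠ 0 ∧ q ^ k ∈ pPowers K n p ∧ q ^ k ∣ s := by
  by_cases hqB : q ∈ pPowers K n p
  · exact ⟨1, one_ne_zero, by simpa using hqB, by simpa using hqs⟩
  have : ∃ i, pderiv i q ≠ 0 := by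
    by_contra! h
    exact hqB (mem_of_pderiv h)
  obtain ⟨i, hi⟩ := this
  obtain ⟨e, u, hu, rfl⟩ := WfDvdMonoid.max_power_factor hs0 hq.irreducible
  have he : e ≠ 0 := by rintro rfl; simp at hqs; exact hu hqs
  obtain ⟨e, rfl⟩ := Nat.exists_eq_succ_of_ne_zero he
  refine ⟨p, hp.out.ne_zero, pow_mem' q, ?_⟩
  suffices h : p ∣ e + 1 from
    (pow_dvd_pow q (Nat.le_of_dvd (Nat.succ_pos _) h)).trans (dvd_mul_right _ _)
  by_contra h
  have h1 := der_eq_zero (pderiv i) hs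
  rw [Derivation.leibniz, Derivation.leibniz_pow] at h1
  simp only [smul_eq_mul, nsmul_eq_mul, Nat.succ_eq_add_one, Nat.add_sub_cancel] at h1
  have h2 : q ^ e * (q * pderiv i u + ((e + 1 : ℕ) : MvPolynomial (Fin n) K) * (u * pderiv i q)) = 0 := by
    rw [← h1]; ring
  have h3 := (mul_eq_zero.mp h2).resolve_left (pow_ne_zero _ hq.ne_zero)
  have h4 : q ∣ ((e + 1 : ℕ) : MvPolynomial (Fin n) K) * (u * pderiv i q) := by
    rw [← dvd_add_right (dvd_mul_right q (pderiv i u)), h3]; exact dvd_zero _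
  rw [(natCast_isUnit (p := p) h).dvd_mul_left] at h4
  exact (hq.dvd_or_dvd h4).elim hu (not_dvd_pderiv i hi)

end basics
section span
variable {K : Type*} [CommRing K] {n p m : ℕ}

theorem pMonomial_mul [hp : Fact p.Prime] [CharP K p] (f : Fin m → MvPolynomial (Fin n) K)
    (α β : Fin m → Fin p) : ∃ (γ : Fin m → Fin p) (b : MvPolynomial (Fin n) K), b ∈ pPowers K n p ∧
      pMonomial f α * pMonomial f β = b * pMonomial f γ ∧
      ∀ i, α i = ⟨0, hp.out.pos⟩ → β i = ⟨0, hp.out.pos⟩ → γ i = ⟨0, hp.out.pos⟩ := by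
  refine ⟨fun i => ⟨((α i : ℕ) + β i) % p, Nat.mod_lt _ hp.out.pos⟩,
    ∏ i, (f i ^ p) ^ (((α i : ℕ) + β i) / p), ?_, ?_, ?_⟩
  · exact prod_mem fun i _ => pow_mem (pow_mem' _) _
  · simp only [pMonomial]
    rw [← Finset.prod_mul_distrib, ← Finset.prod_mul_distrib]
    refine Finset.prod_congr rfl fun i _ => ?_
    rw [← pow_add, ← pow_mul, ← pow_add, Nat.div_add_mod]
  · intro i h1 h2
    simp [h1, h2]

theorem closure_span [hp : Fact p.Prime] [CharP K p] (f : Fin m → MvPolynomial (Fin n) K)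
    (I : Set (Fin m)) {r : MvPolynomial (Fin n) K}
    (hr : r ∈ Subring.closure (↑(pPowers K n p) ∪ (f '' I))) :
    ∃ β : (Fin m → Fin p) → MvPolynomial (Fin n) K, (∀ α, β α ∈ pPowers K n p) ∧
      (∀ α, ∀ i, i ∉ I → α i ≠ ⟨0, hp.out.pos⟩ → β α = 0) ∧
      r = ∑ α, β α * pMonomial f α := by
  classical
  let z : Fin p := ⟨0, hp.out.pos⟩
  let S : Set (MvPolynomial (Fin n) K) :=
    {a | ∃ α : Fin m → Fin p, (∀ i, i ∉ I → α i = z) ∧ a = pMonomial f α}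
  have h1S : (1 : MvPolynomial (Fin n) K) ∈ S := ⟨fun _ => z, fun _ _ => rfl, by simp [pMonomial, z]⟩
  have hB : ∀ b ∈ pPowers K n p, b ∈ Submodule.span (pPowers K n p) S := by
    intro b hb
    have := Submodule.smul_mem (Submodule.span (pPowers K n p) S) ⟨b, hb⟩ (Submodule.subset_span h1S)
    simpa [Subring.smul_def] using this
  have key : r ∈ Submodule.span (pPowers K n p) S := by
    induction hr using Subring.closure_induction with
    | mem x hx =>
      rcases hx with hx | ⟨i, hi, rfl⟩
      · exact hB x hx
      · apply Submodule.subset_span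
        refine ⟨fun k => if k = i then ⟨1, hp.out.one_lt⟩ else z, ?_, ?_⟩
        · intro k hk
          have : k ≠ i := by rintro rfl; exact hk hi
          simp [this]
        · unfold pMonomial
          rw [Finset.prod_eq_single i]
          · simp
          · intro b _ hb; simp [hb, z]
          · simp
    | zero => exact zero_mem _
    | one => exact Submodule.subset_span h1S
    | add x y _ _ hx hy => exact add_mem hx hy
    | neg x _ hx => exact neg_mem hx
    | mul x y _ _ hx hy =>
      have h := Submodule.mul_mem_mul hx hy
      rw [Submodule.span_mul_span] at h
      refine Submodule.span_le.mpr ?_ h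
      rintro _ ⟨_, ⟨α, hα, rfl⟩, _, ⟨β, hβ, rfl⟩, rfl⟩
      obtain ⟨γ, b, hb, he, hγ⟩ := pMonomial_mul f α β
      simp only [SetLike.mem_coe, he]
      exact Submodule.smul_mem (Submodule.span (pPowers K n p) S) ⟨b, hb⟩
        (Submodule.subset_span ⟨γ, fun i hi => hγ i (hα i hi) (hβ i hi), rfl⟩)
  clear hr
  induction key using Submodule.span_induction with
  | mem x hx =>
    obtain ⟨α, hα, rfl⟩ := hx
    refine ⟨Pi.single α 1, ?_, ?_, ?_⟩
    · intro γ
      by_cases h : γ = α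
      · subst h; simp
      · simp [h]
    · intro γ i hi h
      have : γ ≠ α := by rintro rfl; exact h (hα i hi)
      simp [this]
    · simp [Pi.single_apply]
  | zero => exact ⟨0, by simp, by simp, by simp⟩
  | add x y _ _ hx hy =>
    obtain ⟨β, h1, h2, h3⟩ := hx
    obtain ⟨γ, h1', h2', h3'⟩ := hy
    refine ⟨β + γ, fun α => add_mem (h1 α) (h1' α), fun α i hi h => ?_, ?_⟩
    · simp [h2 α i hi h, h2' α i hi h]
    · simp [h3, h3', add_mul, Finset.sum_add_distrib]
  | smul b x _ hx =>
    obtain ⟨β, h1, h2, h3⟩ := hx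
    refine ⟨fun α => b * β α, fun α => mul_mem b.2 (h1 α), fun α i hi h => ?_, ?_⟩
    · simp [h2 α i hi h]
    · simp [h3, Subring.smul_def, Finset.mul_sum, mul_assoc]

theorem one_var {A : Type*} [CommRing A] [hp : Fact p.Prime] [CharP A p]
    (D : A → A) (hadd : ∀ a b, D (a + b) = D a + D b) (hmul : ∀ a b, D (a * b) = a * D b + b * D a)
    (x J g : A) (hx : D x = J) (hg : D g = 0) (hJ : ∀ a, g ∣ J * a → g ∣ a)
    (N : ℕ) (hN : N ≤ p) (r : ℕ → A) (hr : ∀ s, D (r s) = 0)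
    (h : g ∣ ∑ s ∈ Finset.range N, r s * x ^ s) : ∀ s < N, g ∣ r s := by
  have hD0 : D 0 = 0 := by simpa using hadd 0 0
  have hD1 : D 1 = 0 := by simpa using hmul 1 1
  have hpow : ∀ s : ℕ, D (x ^ s) = s * x ^ (s - 1) * J := by
    intro s
    induction s with
    | zero => simp [hD1]
    | succ s ih =>
      rw [pow_succ, hmul, ih, hx]
      cases s with
      | zero => simp
      | succ s => simp; ring
  have hsum : ∀ (t : Finset ℕ) (F : ℕ → A), D (∑ s ∈ t, F s) = ∑ s ∈ t, D (F s) := by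
    intro t F
    exact map_sum (AddMonoidHom.mk' D hadd) F t
  have hnat : ∀ k : ℕ, D (k : A) = 0 := by
    intro k
    induction k with
    | zero => simpa using hD0
    | succ k ih => simp [hadd, ih, hD1]
  induction N generalizing r with
  | zero => intro s hs; omega
  | succ N ih =>
    have h1 : g ∣ D (∑ s ∈ Finset.range (N + 1), r s * x ^ s) := by
      obtain ⟨u, hu⟩ := h
      rw [hu, hmul, hg]; simp
    have h2 : D (∑ s ∈ Finset.range (N + 1), r s * x ^ s) =
        J * ∑ s ∈ Finset.range N, (((s + 1 : ℕ) : A) * r (s + 1)) * x ^ s := by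
      rw [hsum, Finset.sum_range_succ']
      simp only [hmul, hr, hpow]
      rw [Finset.mul_sum]
      simp
      refine Finset.sum_congr rfl fun s _ => ?_
      ring
    rw [h2] at h1
    have h3 := ih (by omega) (fun s => ((s + 1 : ℕ) : A) * r (s + 1))
      (fun s => by simp only [hmul, hr, hnat]; simp) (hJ _ h1)
    have h4 : ∀ s < N, g ∣ r (s + 1) := by
      intro s hs
      have hu : IsUnit ((s + 1 : ℕ) : A) := by
        have h : IsUnit ((s + 1 : ℕ) : ZMod p) := (ZMod.isUnit_iff_coprime _ p).mpr
          ((Nat.Prime.coprime_iff_not_dvd hp.out).mpr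
            (fun h => by have := Nat.le_of_dvd (by omega) h; omega)).symm
        have := h.map (ZMod.castHom dvd_rfl A)
        rwa [map_natCast] at this
      have := h3 s hs
      simpa only [hu.dvd_mul_left] using this
    have h5 : g ∣ r 0 := by
      rw [Finset.sum_range_succ'] at h
      rw [dvd_add_right] at h
      · simpa using h
      · exact Finset.dvd_sum fun s hs => (h4 s (Finset.mem_range.mp hs)).mul_right _
    intro s hs
    cases s with
    | zero => exact h5
    | succ s => exact h4 s (by omega)

theorem multi_var {A : Type*} [CommRing A] [hp : Fact p.Prime] [CharP A p] {k : Type*}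
    [CommRing k] [Algebra k A] (J g : A) (hJ : ∀ a, g ∣ J * a → g ∣ a) (N : ℕ)
    (D : Fin N → Derivation k A A) (x : Fin N → A)
    (hx : ∀ i j, D i (x j) = if i = j then J else 0) (hg : ∀ i, D i g = 0)
    (β : (Fin N → Fin p) → A) (hβ : ∀ i α, D i (β α) = 0)
    (h : g ∣ ∑ α, β α * ∏ i, x i ^ (α i : ℕ)) : ∀ α, g ∣ β α := by
  induction N with
  | zero =>
    intro α
    rw [Fintype.sum_unique, Fin.prod_univ_zero, mul_one] at h
    convert h
  | succ N ih =>
    rw [← (Fin.consEquiv fun _ : Fin (N+1) => Fin p).sum_comp, Fintype.sum_prod_type] at h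
    simp only [Fin.consEquiv, Equiv.coe_fn_mk, Fin.prod_univ_succ, Fin.cons_zero, Fin.cons_succ] at h
    let r : ℕ → A := fun s => if hs : s < p then
      ∑ α : Fin N → Fin p, β (Fin.cons ⟨s, hs⟩ α) * ∏ i, x (Fin.succ i) ^ (α i : ℕ) else 0
    have h1 := one_var (D 0) (fun a b => by simp) (fun a b => by simp) (x 0) J g (by simp [hx])
      (hg 0) hJ p le_rfl r (by
        intro s
        simp only [r]
        split_ifs
        · rw [map_sum]
          refine Finset.sum_eq_zero fun α _ => ?_
          rw [Derivation.leibniz, hβ]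
          have : D 0 (∏ i : Fin N, x (Fin.succ i) ^ (α i : ℕ)) = 0 := by
            refine Finset.prod_induction _ (fun a => D 0 a = 0) ?_ (by simp) ?_
            · intro a b ha hb; simp [ha, hb]
            · intro i _
              rw [Derivation.leibniz_pow, hx]
              simp [(Fin.succ_ne_zero i).symm]
          rw [this]; simp
        · simp) (by
        rw [Finset.sum_range]
        convert h using 2 with s
        simp only [r, s.2, dif_pos, Finset.sum_mul]
        refine Finset.sum_congr rfl fun α _ => ?_
        ring)
    intro α
    have h2 := h1 (α 0) (α 0).2
    simp only [r, (α 0).2, dif_pos] at h2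
    have h3 := ih (fun i => D i.succ) (fun i => x i.succ) (fun i j => by simp [hx])
      (fun i => hg _) (fun γ => β (Fin.cons (α 0) γ)) (fun i γ => hβ _ _) h2 (Fin.tail α)
    simpa using h3
end span
section twothree
variable {K : Type*} [CommRing K] {n p m : ℕ}

theorem pMonomial_update {S : Type*} [CommRing S] (hp : 0 < p) (f : Fin m → S) (i : Fin m)
    (α : Fin m → Fin p) (hα : α i = ⟨0, hp⟩) (s : Fin p) :
    pMonomial f (Function.update α i s) = pMonomial f α * f i ^ (s : ℕ) := by
  classical
  unfold pMonomial
  rw [Fintype.prod_eq_mul_prod_compl i, Fintype.prod_eq_mul_prod_compl i, hα]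
  simp only [Function.update_self, pow_zero, one_mul]
  rw [mul_comm]
  congr 1
  refine Finset.prod_congr rfl fun k hk => ?_
  have : k ≠ i := by simpa using hk
  rw [Function.update_of_ne this]

theorem shift_sum {S : Type*} [CommRing S] (hp : 0 < p) (f : Fin m → S) (i : Fin m)
    (β : (Fin m → Fin p) → S) (hβ : ∀ α, α i ≠ ⟨0, hp⟩ → β α = 0) (s : Fin p) :
    (∑ α, β α * pMonomial f α) * f i ^ (s : ℕ) =
      ∑ α : Fin m → Fin p, if α i = s then β (Function.update α i ⟨0, hp⟩) * pMonomial f α else 0 := by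
  classical
  have h1 : ∑ α, β α * pMonomial f α =
      ∑ α : Fin m → Fin p with α i = ⟨0, hp⟩, β α * pMonomial f α := by
    symm
    refine Finset.sum_subset (Finset.subset_univ _) fun α _ h => ?_
    rw [hβ α (by simpa using h), zero_mul]
  rw [h1, ← Finset.sum_filter, Finset.sum_mul]
  refine Finset.sum_bij' (fun α _ => Function.update α i s)
    (fun α _ => Function.update α i ⟨0, hp⟩) ?_ ?_ ?_ ?_ ?_
  · intro α _; simp
  · intro α _; simp
  · intro α h
    have h : α i = ⟨0, hp⟩ := by simpa using h
    simp [← h]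
  · intro α h
    have h : α i = s := by simpa using h
    simp [← h]
  · intro α h
    have h : α i = ⟨0, hp⟩ := by simpa using h
    rw [pMonomial_update hp f i α h, Function.update_idem, ← h, Function.update_eq_self]
    ring

theorem coeff_dvd [IsDomain K] [hp : Fact p.Prime] [CharP K p]
    {f : Fin m → MvPolynomial (Fin n) K}
    {d : Derivation K (MvPolynomial (Fin n) K) (MvPolynomial (Fin n) K)}
    (H : IsPBasis (pPowers K n p) {a | d a = 0} p f) (i : Fin m)
    {g : MvPolynomial (Fin n) K} (hg : g ∈ pPowers K n p) (r : ℕ → MvPolynomial (Fin n) K)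
    (hr : ∀ s, r s ∈ Ri K p f i) (h : g ∣ ∑ s ∈ Finset.range p, r s * f i ^ s) :
    ∀ s < p, g ∣ r s := by
  classical
  obtain ⟨-, hmon, hind, hspan⟩ := H
  choose β hβB hβ0 hβ using fun s => closure_span (p := p) f _ (hr s)
  have hβ0 : ∀ s α, α i ≠ ⟨0, hp.out.pos⟩ → β s α = 0 := fun s α h => hβ0 s α i (by simp) h
  let γ : (Fin m → Fin p) → MvPolynomial (Fin n) K := fun α =>
    β (α i) (Function.update α i ⟨0, hp.out.pos⟩)
  have h1 : ∑ s ∈ Finset.range p, r s * f i ^ s = ∑ α, γ α * pMonomial f α := by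
    rw [Finset.sum_range]
    simp only [hβ]
    rw [Finset.sum_congr rfl fun (s : Fin p) _ => shift_sum hp.out.pos f i (β s) (hβ0 s) s]
    rw [Finset.sum_comm]
    refine Finset.sum_congr rfl fun α _ => ?_
    rw [Finset.sum_ite_eq]
    simp [γ]
  have hγB : ∀ α, γ α ∈ pPowers K n p := fun α => hβB _ _
  have h2 : ∃ a, d a = 0 ∧ ∑ s ∈ Finset.range p, r s * f i ^ s = g * a := by
    obtain ⟨a, ha⟩ := h
    by_cases hg0 : g = 0
    · exact ⟨0, by simp, by rw [ha, hg0]; simp⟩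
    refine ⟨a, ?_, ha⟩
    have h3 : d (g * a) = 0 := by
      rw [← ha, h1, map_sum]
      refine Finset.sum_eq_zero fun α _ => ?_
      have : d (pMonomial f α) = 0 := hmon α
      rw [Derivation.leibniz, der_eq_zero d (hγB α), this]; simp
    rw [Derivation.leibniz, der_eq_zero d hg] at h3
    simpa [hg0] using h3
  obtain ⟨a, had, ha⟩ := h2
  obtain ⟨b, hbB, hb⟩ := hspan a had
  have h4 := hind (fun α => γ α - g * b α) (fun α => sub_mem (hγB α) (mul_mem hg (hbB α))) (by
    simp only [sub_mul, Finset.sum_sub_distrib, ← h1, ha, mul_assoc, ← Finset.mul_sum, ← hb]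
    simp)
  have h5 : ∀ α, g ∣ γ α := fun α => ⟨b α, sub_eq_zero.mp (h4 α)⟩
  intro s hs
  rw [hβ s]
  refine Finset.dvd_sum fun α _ => Dvd.dvd.mul_right ?_ _
  by_cases hα : α i = ⟨0, hp.out.pos⟩
  · have := h5 (Function.update α i ⟨s, hs⟩)
    simpa [γ, ← hα] using this
  · rw [hβ0 s α hα]; exact dvd_zero _

theorem Rij_le_Ri {f : Fin m → MvPolynomial (Fin n) K} (i j : Fin m) :
    Rij K p f i j ≤ Ri K p f i :=
  Subring.closure_mono (Set.union_subset_union_right _ (Set.image_mono fun _ h => h.1))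

theorem Rij_le_Rj {f : Fin m → MvPolynomial (Fin n) K} (i j : Fin m) :
    Rij K p f i j ≤ Ri K p f j :=
  Subring.closure_mono (Set.union_subset_union_right _ (Set.image_mono fun _ h => h.2))

theorem f_mem_Ri {f : Fin m → MvPolynomial (Fin n) K} {i j : Fin m} (h : j ≠ i) :
    f j ∈ Ri K p f i := Subring.subset_closure (Or.inr ⟨j, h, rfl⟩)

theorem binom {S : Type*} [CommRing S] (hp : 0 < p) (b c x : S) :
    (b * x + c) ^ (p - 1) = ∑ s ∈ Finset.range p,
      (b ^ s * c ^ (p - 1 - s) * ((p - 1).choose s : S)) * x ^ s := by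
  rw [add_pow, show p - 1 + 1 = p by omega]
  refine Finset.sum_congr rfl fun s _ => ?_
  rw [mul_pow]; ring

theorem exists_prime [IsDomain K] [UniqueFactorizationMonoid K] {q : MvPolynomial (Fin n) K}
    (h0 : q ≠ 0) (hu : ¬ IsUnit q) : ∃ r, Prime r ∧ r ∣ q := by
  obtain ⟨r, hr, hrq⟩ := WfDvdMonoid.exists_irreducible_factor hu h0
  exact ⟨r, hr.prime, hrq⟩

theorem two_three [IsDomain K] [UniqueFactorizationMonoid K] [hp : Fact p.Prime] [CharP K p]
    {f : Fin m → MvPolynomial (Fin n) K}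
    {d : Derivation K (MvPolynomial (Fin n) K) (MvPolynomial (Fin n) K)}
    (H : IsPBasis (pPowers K n p) {a | d a = 0} p f) :
    (∀ i : Fin m, ∀ b c : MvPolynomial (Fin n) K,
          b ∈ Ri K p f i → c ∈ Ri K p f i → b ≠ 0 → IsRelPrime b c →
          Squarefree (b * f i + c) ∧ BFree (pPowers K n p) (b * f i + c)) ∧
       (1 < m → ∀ i j : Fin m, i ≠ j →
          ∀ b₁ b₂ c₁ c₂ : MvPolynomial (Fin n) K,
          b₁ ∈ Rij K p f i j → b₂ ∈ Rij K p f i j →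
          c₁ ∈ Rij K p f i j → c₂ ∈ Rij K p f i j →
          b₁ ≠ 0 → b₂ ≠ 0 → IsRelPrime b₁ c₁ → IsRelPrime b₂ c₂ →
          IsRelPrime (b₁ * f i + c₁) (b₂ * f j + c₂)) := by
  have h2p := hp.out.two_le
  -- divisibility by an element of `B`
  have hlin : ∀ i : Fin m, ∀ b c g : MvPolynomial (Fin n) K,
      b ∈ Ri K p f i → c ∈ Ri K p f i → g ∈ pPowers K n p → g ∣ b * f i + c → g ∣ b ∧ g ∣ c := by
    intro i b c g hb hc hg h
    have h1 := coeff_dvd H i hg (fun s => if s = 0 then c else if s = 1 then b else 0) (by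
      intro s; split_ifs
      · exact hc
      · exact hb
      · exact zero_mem _) (by
      have : ∑ s ∈ Finset.range p, (if s = 0 then c else if s = 1 then b else 0) * f i ^ s =
          b * f i + c := by
        obtain ⟨k, rfl⟩ : ∃ k, p = k + 2 := ⟨p - 2, by omega⟩
        rw [Finset.sum_range_succ', Finset.sum_range_succ']
        simp
      rwa [this])
    exact ⟨by simpa using h1 1 (by omega), by simpa using h1 0 (by omega)⟩
  have hne : ∀ i : Fin m, ∀ b c : MvPolynomial (Fin n) K,
      b ∈ Ri K p f i → c ∈ Ri K p f i → b ≠ 0 → b * f i + c ≠ 0 := by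
    intro i b c hb hc hb0 h
    exact hb0 (zero_dvd_iff.mp (hlin i b c 0 hb hc (zero_mem _) (by rw [h])).1)
  refine ⟨fun i b c hb hc hb0 hbc => ⟨?_, ?_⟩, ?_⟩
  · intro q hq
    by_contra hu
    have hw := hne i b c hb hc hb0
    have hq0 : q ≠ 0 := by
      rintro rfl; simp at hq; exact hw hq
    obtain ⟨r, hr, hrq⟩ := exists_prime hq0 hu
    have h1 : r ^ 2 ∣ b * f i + c := (pow_dvd_pow_of_dvd hrq 2).trans (by rwa [pow_two])
    have h2 : r ^ p ∣ (b * f i + c) ^ (p - 1) := by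
      refine dvd_trans ?_ (pow_dvd_pow_of_dvd h1 (p - 1))
      rw [← pow_mul]
      exact pow_dvd_pow _ (by omega)
    rw [binom hp.out.pos] at h2
    have h3 := coeff_dvd H i (pow_mem' r) _ (fun s => mul_mem (mul_mem (pow_mem hb _) (pow_mem hc _))
      (natCast_mem _ _)) h2
    have h4 := h3 0 (by omega)
    have h5 := h3 (p - 1) (by omega)
    simp at h4 h5
    have hrp : r ∣ r ^ p := dvd_pow_self r (by omega)
    exact hr.not_isUnit (hbc (hr.dvd_of_dvd_pow (hrp.trans h5)) (hr.dvd_of_dvd_pow (hrp.trans h4)))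
  · intro g hg hgw
    obtain ⟨h1, h2⟩ := hlin i b c g hb hc hg hgw
    exact hbc h1 h2
  · intro _ i j hij b₁ b₂ c₁ c₂ hb₁ hb₂ hc₁ hc₂ hb₁0 hb₂0 h₁ h₂ q hq1 hq2
    by_contra hu
    have hw := hne i b₁ c₁ (Rij_le_Ri i j hb₁) (Rij_le_Ri i j hc₁) hb₁0
    have hq0 : q ≠ 0 := by
      rintro rfl; simp at hq1; exact hw hq1
    obtain ⟨r, hr, hrq⟩ := exists_prime hq0 hu
    have h2 : r ^ p ∣ (b₁ * f i + c₁) ^ (p - 1) * (b₂ * f j + c₂) ^ (p - 1) := by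
      refine dvd_trans ?_ (mul_dvd_mul (pow_dvd_pow_of_dvd (hrq.trans hq1) (p - 1))
        (pow_dvd_pow_of_dvd (hrq.trans hq2) (p - 1)))
      rw [← pow_add]
      exact pow_dvd_pow _ (by omega)
    rw [binom hp.out.pos, Finset.sum_mul] at h2
    have h3 := coeff_dvd H i (pow_mem' r) (fun s => (b₁ ^ s * c₁ ^ (p - 1 - s) *
        ((p - 1).choose s : MvPolynomial (Fin n) K)) * (b₂ * f j + c₂) ^ (p - 1)) (fun s =>
      mul_mem (Rij_le_Ri i j (mul_mem (mul_mem (pow_mem hb₁ _) (pow_mem hc₁ _)) (natCast_mem _ _)))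
        (pow_mem (add_mem (mul_mem (Rij_le_Ri i j hb₂) (f_mem_Ri hij.symm)) (Rij_le_Ri i j hc₂)) _))
      (by
        refine h2.trans (dvd_of_eq (Finset.sum_congr rfl fun s _ => ?_))
        ring)
    have h4 : ∀ s < p, ∀ t < p, r ^ p ∣ (b₁ ^ s * c₁ ^ (p - 1 - s) *
        ((p - 1).choose s : MvPolynomial (Fin n) K)) * (b₂ ^ t * c₂ ^ (p - 1 - t) *
        ((p - 1).choose t : MvPolynomial (Fin n) K)) := by
      intro s hs
      have h5 := h3 s hs
      rw [binom hp.out.pos, Finset.mul_sum] at h5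
      exact coeff_dvd H j (pow_mem' r) (fun t => (b₁ ^ s * c₁ ^ (p - 1 - s) *
        ((p - 1).choose s : MvPolynomial (Fin n) K)) * (b₂ ^ t * c₂ ^ (p - 1 - t) *
        ((p - 1).choose t : MvPolynomial (Fin n) K))) (fun t => Rij_le_Rj i j
        (mul_mem (mul_mem (mul_mem (pow_mem hb₁ _) (pow_mem hc₁ _)) (natCast_mem _ _))
        (mul_mem (mul_mem (pow_mem hb₂ _) (pow_mem hc₂ _)) (natCast_mem _ _)))) (by
        refine h5.trans (dvd_of_eq (Finset.sum_congr rfl fun s _ => ?_))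
        ring)
    have hrp : r ∣ r ^ p := dvd_pow_self r (by omega)
    have e1 := hrp.trans (h4 0 (by omega) 0 (by omega))
    have e2 := hrp.trans (h4 0 (by omega) (p-1) (by omega))
    have e3 := hrp.trans (h4 (p-1) (by omega) 0 (by omega))
    have e4 := hrp.trans (h4 (p-1) (by omega) (p-1) (by omega))
    simp at e1 e2 e3 e4
    have key : ∀ x y : MvPolynomial (Fin n) K, r ∣ x ^ (p - 1) * y ^ (p - 1) → r ∣ x ∨ r ∣ y :=
      fun x y h => (hr.dvd_or_dvd h).imp hr.dvd_of_dvd_pow hr.dvd_of_dvd_pow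
    have n1 : ¬ (r ∣ b₁ ∧ r ∣ c₁) := fun h => hr.not_isUnit (h₁ h.1 h.2)
    have n2 : ¬ (r ∣ b₂ ∧ r ∣ c₂) := fun h => hr.not_isUnit (h₂ h.1 h.2)
    have e1 := key _ _ e1
    have e2 := key _ _ e2
    have e3 := key _ _ e3
    have e4 := key _ _ e4
    tauto
end twothree
section onetwo
variable {K : Type*} [CommRing K] {n p m : ℕ}

/-- The derivation `D_i` with `D_i (f_k) = δ_{ik} J`. -/
noncomputable def Dj (f : Fin m → MvPolynomial (Fin n) K) (j : Fin m → Fin n) (i : Fin m) :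
    Derivation K (MvPolynomial (Fin n) K) (MvPolynomial (Fin n) K) :=
  ∑ l, (Matrix.of fun i l => pderiv (j l) (f i)).adjugate l i • pderiv (j l)

theorem Dj_f (f : Fin m → MvPolynomial (Fin n) K) (j : Fin m → Fin n) (i k : Fin m) :
    Dj f j i (f k) = if i = k then jacMinor f j else 0 := by
  have h := congrFun (congrFun (Matrix.mul_adjugate (Matrix.of fun i l => pderiv (j l) (f i))) k) i
  rw [Matrix.mul_apply] at h
  simp only [Dj, jacMinor, ← Derivation.coeFnAddMonoidHom_apply,
    map_sum, Finset.sum_apply]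
  simp only [Derivation.coeFnAddMonoidHom_apply, Derivation.smul_apply, smul_eq_mul]
  rw [Matrix.smul_apply, Matrix.one_apply] at h
  simp only [Matrix.of_apply] at h
  simp only [mul_comm (Matrix.adjugate _ _ _)]
  rw [h]
  simp [eq_comm]

theorem Dj_X (f : Fin m → MvPolynomial (Fin n) K) (j : Fin m → Fin n) (i : Fin m) (t : Fin n)
    (ht : t ∉ Set.range j) : Dj f j i (X t) = 0 := by
  simp only [Dj, ← Derivation.coeFnAddMonoidHom_apply, map_sum, Finset.sum_apply]
  refine Finset.sum_eq_zero fun l _ => ?_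
  simp only [Derivation.coeFnAddMonoidHom_apply, Derivation.smul_apply]
  rw [pderiv_X_of_ne (by rintro rfl; exact ht ⟨l, rfl⟩), smul_zero]

/-- The derivation dual to the complementary variable `x_t`. -/
noncomputable def Et (f : Fin m → MvPolynomial (Fin n) K) (j : Fin m → Fin n) (t : Fin n) :
    Derivation K (MvPolynomial (Fin n) K) (MvPolynomial (Fin n) K) :=
  jacMinor f j • pderiv t - ∑ i, pderiv t (f i) • Dj f j i

theorem Et_f (f : Fin m → MvPolynomial (Fin n) K) (j : Fin m → Fin n) (t : Fin n) (k : Fin m) :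
    Et f j t (f k) = 0 := by
  have : (∑ i, pderiv t (f i) • Dj f j i) (f k) = pderiv t (f k) * jacMinor f j := by
    simp only [← Derivation.coeFnAddMonoidHom_apply, map_sum, Finset.sum_apply]
    simp [Dj_f]
  rw [Et, Derivation.sub_apply, this, Derivation.smul_apply, smul_eq_mul]
  ring

theorem Et_X (f : Fin m → MvPolynomial (Fin n) K) (j : Fin m → Fin n) (t s : Fin n)
    (hs : s ∉ Set.range j) : Et f j t (X s) = if t = s then jacMinor f j else 0 := by
  have : (∑ i, pderiv t (f i) • Dj f j i) (X s) = 0 := by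
    simp only [← Derivation.coeFnAddMonoidHom_apply, map_sum, Finset.sum_apply]
    simp [Dj_X _ _ _ _ hs]
  rw [Et, Derivation.sub_apply, this, Derivation.smul_apply, smul_eq_mul, pderiv_X]
  by_cases h : t = s
  · subst h; simp
  · simp [h]

theorem jac_inj {f : Fin m → MvPolynomial (Fin n) K} {j : Fin m → Fin n} (h : jacMinor f j ≠ 0) :
    Function.Injective j := by
  intro a b hab
  by_contra hne
  refine h (Matrix.det_zero_of_column_eq hne fun i => ?_)
  simp [hab]

/-- independence over `B`, general index type -/
theorem indep [IsDomain K] [hp : Fact p.Prime] [CharP K p] {ι : Type*} [Fintype ι] [DecidableEq ι]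
    (J : MvPolynomial (Fin n) K) (hJ : J ≠ 0)
    (D : ι → Derivation K (MvPolynomial (Fin n) K) (MvPolynomial (Fin n) K))
    (x : ι → MvPolynomial (Fin n) K)
    (hx : ∀ i j, D i (x j) = if i = j then J else 0)
    (β : (ι → Fin p) → MvPolynomial (Fin n) K) (hβ : ∀ α, β α ∈ pPowers K n p)
    (h : ∑ α, β α * ∏ i, x i ^ (α i : ℕ) = 0) (α : ι → Fin p) : β α = 0 := by
  let e := Fintype.equivFin ι
  have h1 := multi_var (p := p) J (0 : MvPolynomial (Fin n) K) (fun a h => by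
    rw [zero_dvd_iff] at *; exact (mul_eq_zero.mp h).resolve_left hJ) (Fintype.card ι)
    (fun i => D (e.symm i)) (fun i => x (e.symm i)) (fun i j => by simp [hx])
    (fun i => by simp) (fun γ => β (fun i => γ (e i))) (fun i γ => der_eq_zero _ (hβ _)) (by
      rw [zero_dvd_iff, ← h]
      refine Fintype.sum_equiv (Equiv.arrowCongr e.symm (Equiv.refl _)) _ _ fun γ => ?_
      congr 1
      refine Fintype.prod_equiv e.symm _ _ fun i => ?_
      simp) (fun i => α (e.symm i))
  simpa using h1

theorem span_X [hp : Fact p.Prime] :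
    Submodule.span (pPowers K n p)
      (Set.range fun α : Fin n → Fin p => (pMonomial X α : MvPolynomial (Fin n) K)) = ⊤ := by
  rw [eq_top_iff]
  intro a _
  rw [a.as_sum]
  refine sum_mem fun e _ => ?_
  let α : Fin n → Fin p := fun i => ⟨e i % p, Nat.mod_lt _ hp.out.pos⟩
  let b : MvPolynomial (Fin n) K := C (coeff e a) * ∏ i, (X i ^ p) ^ (e i / p)
  have hb : b ∈ pPowers K n p :=
    mul_mem (C_mem _) (prod_mem fun i _ => pow_mem (X_pow_mem i) _)
  have : monomial e (coeff e a) = b * pMonomial X α := by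
    rw [monomial_eq, Finsupp.prod_fintype _ _ (by simp), mul_assoc]
    congr 1
    rw [pMonomial, ← Finset.prod_mul_distrib]
    refine Finset.prod_congr rfl fun i _ => ?_
    rw [← pow_mul, ← pow_add, Nat.div_add_mod]
  rw [this]
  exact Submodule.smul_mem _ (⟨b, hb⟩ : pPowers K n p) (Submodule.subset_span ⟨α, rfl⟩)

theorem exists_rel [IsDomain K] [hp : Fact p.Prime] [CharP K p] {ι : Type*} [Fintype ι]
    [DecidableEq ι]
    (hι : Fintype.card ι = n) (x : ι → MvPolynomial (Fin n) K)
    (hind : ∀ β : (ι → Fin p) → MvPolynomial (Fin n) K, (∀ α, β α ∈ pPowers K n p) →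
      ∑ α, β α * ∏ i, x i ^ (α i : ℕ) = 0 → ∀ α, β α = 0) (a : MvPolynomial (Fin n) K) :
    ∃ s ∈ pPowers K n p, s ≠ 0 ∧ ∃ β : (ι → Fin p) → MvPolynomial (Fin n) K,
      (∀ α, β α ∈ pPowers K n p) ∧ s * a = ∑ α, β α * ∏ i, x i ^ (α i : ℕ) := by
  classical
  let v : Option (ι → Fin p) → MvPolynomial (Fin n) K :=
    fun o => o.elim a fun α => ∏ i, x i ^ (α i : ℕ)
  have hv : ¬ LinearIndependent (pPowers K n p) v := by
    intro h
    have h1 := linearIndependent_le_span_aux' v h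
      (Set.range fun α : Fin n → Fin p => (pMonomial X α : MvPolynomial (Fin n) K))
      (by rw [span_X]; exact Set.subset_univ _)
    have h2 := h1.trans (Fintype.card_range_le _)
    simp only [Fintype.card_option, Fintype.card_pi, Finset.prod_const, Fintype.card_fin,
      Finset.card_univ, hι] at h2
    omega
  rw [Fintype.not_linearIndependent_iff] at hv
  obtain ⟨g, hg, o, ho⟩ := hv
  rw [Fintype.sum_option] at hg
  simp only [v, Option.elim, Subring.smul_def, smul_eq_mul] at hg
  have hs : g none ≠ 0 := by
    intro h0
    rw [h0] at hg
    have := hind (fun α => g (some α)) (fun α => (g _).2) (by simpa using hg)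
    cases o with
    | none => exact ho h0
    | some α => exact ho (Subtype.ext (this α))
  refine ⟨g none, (g none).2, fun h => hs (Subtype.ext h), fun α => -g (some α),
    fun α => neg_mem (g _).2, ?_⟩
  rw [eq_neg_of_add_eq_zero_left hg]
  simp

theorem der_prod {ι : Type*} {A : Type*} [CommRing A] {k : Type*} [CommRing k] [Algebra k A]
    (d : Derivation k A A) (x l : ι → A) (hd : ∀ i, d (x i) = l i * x i) (t : Finset ι)
    (α : ι → ℕ) : d (∏ i ∈ t, x i ^ α i) = (∑ i ∈ t, α i * l i) * ∏ i ∈ t, x i ^ α i := by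
  classical
  induction t using Finset.induction_on with
  | empty => simp
  | insert i t hi ih =>
    rw [Finset.prod_insert hi, Finset.sum_insert hi, Derivation.leibniz, ih, Derivation.leibniz_pow, hd]
    simp only [smul_eq_mul, nsmul_eq_mul]
    cases α i with
    | zero => simp
    | succ e => simp only [Nat.add_sub_cancel]; ring

end onetwo
section onetwo2
variable {K : Type*} [CommRing K] {n p m : ℕ}

/-- The diagonalizable derivation with constants `C_B(f)`. -/
noncomputable def dd (p : ℕ) (f : Fin m → MvPolynomial (Fin n) K) (j : Fin m → Fin n) (o : Fin n) :
    Derivation K (MvPolynomial (Fin n) K) (MvPolynomial (Fin n) K) :=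
  letI := Classical.decPred fun t => t ∉ Set.range j
  ∑ t : {t // t ∉ Set.range j}, ((X o ^ p) ^ (t.1 : ℕ) * X t.1 : MvPolynomial (Fin n) K) • Et f j t.1

theorem dd_f (f : Fin m → MvPolynomial (Fin n) K) (j : Fin m → Fin n) (o : Fin n) (k : Fin m) :
    dd p f j o (f k) = 0 := by
  simp only [dd, ← Derivation.coeFnAddMonoidHom_apply, map_sum, Finset.sum_apply]
  simp [Et_f]

theorem dd_X (f : Fin m → MvPolynomial (Fin n) K) (j : Fin m → Fin n) (o : Fin n)
    (s : Fin n) (hs : s ∉ Set.range j) :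
    dd p f j o (X s) = ((X o ^ p) ^ (s : ℕ) * jacMinor f j) * X s := by
  classical
  simp only [dd, ← Derivation.coeFnAddMonoidHom_apply, map_sum, Finset.sum_apply]
  rw [Finset.sum_eq_single ⟨s, hs⟩]
  · simp [Et_X _ _ _ _ hs]; ring
  · intro t _ ht
    have : t.1 ≠ s := fun h => ht (Subtype.ext h)
    simp [Et_X _ _ _ _ hs, this]
  · simp

theorem dd_ker [IsDomain K] [hp : Fact p.Prime] [CharP K p] (f : Fin m → MvPolynomial (Fin n) K)
    (j : Fin m → Fin n) (o : Fin n) (hJ : jacMinor f j ≠ 0) {a : MvPolynomial (Fin n) K}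
    (ha : dd p f j o a = 0) : ∃ s ∈ pPowers K n p, s ≠ 0 ∧
      s * a ∈ Subring.closure (↑(pPowers K n p) ∪ (f '' Set.univ)) := by
  classical
  have hj := jac_inj hJ
  let x : (Fin m ⊕ {t // t ∉ Set.range j}) → MvPolynomial (Fin n) K := Sum.elim f fun t => X t.1
  let D : (Fin m ⊕ {t // t ∉ Set.range j}) → Derivation K (MvPolynomial (Fin n) K) (MvPolynomial (Fin n) K) :=
    Sum.elim (Dj f j) fun t => Et f j t.1
  have hx : ∀ i k, D i (x k) = if i = k then jacMinor f j else 0 := by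
    rintro (i | t) (k | s)
    · simp [D, x, Dj_f]
    · simp [D, x, Dj_X _ _ _ _ s.2]
    · simp [D, x, Et_f]
    · simp only [D, x, Sum.elim_inr, Et_X _ _ _ _ s.2, Sum.inr.injEq, Subtype.ext_iff]
  have hcard : Fintype.card (Fin m ⊕ {t // t ∉ Set.range j}) = n := by
    have h1 := Fintype.card_congr (Equiv.Set.sumCompl (Set.range j))
    rw [Fintype.card_fin] at h1
    have e : (Fin m ⊕ {t // t ∉ Set.range j}) ≃ (Set.range j) ⊕ ((Set.range j)ᶜ : Set (Fin n)) :=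
      Equiv.sumCongr (Equiv.ofInjective j hj) (Equiv.refl _)
    exact (Fintype.card_congr e).trans h1
  have hind := indep (p := p) (jacMinor f j) hJ D x hx
  obtain ⟨s, hs, hs0, β, hβ, hsa⟩ := exists_rel hcard x hind a
  refine ⟨s, hs, hs0, ?_⟩
  let l : (Fin m ⊕ {t // t ∉ Set.range j}) → MvPolynomial (Fin n) K :=
    Sum.elim (fun _ => 0) fun t => (X o ^ p) ^ (t.1 : ℕ) * jacMinor f j
  have hl : ∀ i, dd p f j o (x i) = l i * x i := by
    rintro (i | t)
    · simp [x, l, dd_f]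
    · simp only [x, l, Sum.elim_inr, dd_X _ _ _ _ t.2]
  let c : ((Fin m ⊕ {t // t ∉ Set.range j}) → Fin p) → MvPolynomial (Fin n) K := fun α =>
    ∑ t : {t // t ∉ Set.range j}, ((α (Sum.inr t) : ℕ) : MvPolynomial (Fin n) K) * (X o ^ p) ^ (t.1 : ℕ)
  have hc : ∀ α, c α ∈ pPowers K n p := fun α =>
    sum_mem fun t _ => mul_mem (natCast_mem _ _) (pow_mem (X_pow_mem _) _)
  have h1 : jacMinor f j * ∑ α, (β α * c α) * ∏ i, x i ^ (α i : ℕ) = 0 := by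
    have h2 : dd p f j o (s * a) = 0 := by
      rw [Derivation.leibniz, ha, der_eq_zero _ hs]; simp
    rw [hsa, map_sum] at h2
    rw [← h2, Finset.mul_sum]
    refine Finset.sum_congr rfl fun α _ => ?_
    rw [Derivation.leibniz, der_eq_zero _ (hβ α), der_prod _ x l hl Finset.univ (fun i => (α i : ℕ))]
    rw [Fintype.sum_sum_type]
    simp only [l, c, Sum.elim_inl, Sum.elim_inr, mul_zero, Finset.sum_const_zero, zero_add, smul_zero,
      add_zero, smul_eq_mul, ← mul_assoc, ← Finset.sum_mul]
    ring
  have h2 := hind (fun α => β α * c α) (fun α => mul_mem (hβ α) (hc α))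
    ((mul_eq_zero.mp h1).resolve_left hJ)
  have h3 : ∀ α, β α ≠ 0 → ∀ t, (α (Sum.inr t) : ℕ) = 0 := by
    intro α hα t
    have h4 := congrArg (coeff (Finsupp.single o (p * (t.1 : ℕ)))) ((mul_eq_zero.mp (h2 α)).resolve_left hα)
    simp only [c, coeff_sum, coeff_zero] at h4
    rw [Finset.sum_eq_single t] at h4
    · rw [← pow_mul, ← map_natCast C, coeff_C_mul, coeff_X_pow] at h4
      simp only [if_true, mul_one] at h4
      rw [CharP.cast_eq_zero_iff K p] at h4
      exact Nat.eq_zero_of_dvd_of_lt h4 (α (Sum.inr t)).2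
    · intro u _ hu
      rw [← pow_mul, ← map_natCast C, coeff_C_mul, coeff_X_pow, if_neg, mul_zero]
      intro h
      have := Finsupp.single_injective _ h
      apply hu
      apply Subtype.ext
      apply Fin.ext
      exact Nat.eq_of_mul_eq_mul_left hp.out.pos this
    · simp
  rw [hsa]
  refine sum_mem fun α _ => ?_
  by_cases hα : β α = 0
  · rw [hα, zero_mul]; exact zero_mem _
  refine mul_mem (Subring.subset_closure (Set.mem_union_left _ (hβ α))) (prod_mem fun i _ => ?_)
  rcases i with i | t
  · have hf : x (Sum.inl i) ∈ Subring.closure (↑(pPowers K n p) ∪ (f '' Set.univ)) :=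
      Subring.subset_closure (Set.mem_union_right _ ⟨i, trivial, rfl⟩)
    exact pow_mem hf _
  · rw [h3 α hα t, pow_zero]; exact one_mem _

theorem descend [IsDomain K] [UniqueFactorizationMonoid K] [hp : Fact p.Prime] [CharP K p]
    (f : Fin m → MvPolynomial (Fin n) K)
    (h1 : ∀ g : MvPolynomial (Fin n) K, (∀ j : Fin m → Fin n, g ∣ jacMinor f j) → IsUnit g)
    (a s : MvPolynomial (Fin n) K) (hs : s ∈ pPowers K n p) (hs0 : s ≠ 0)
    (β : (Fin m → Fin p) → MvPolynomial (Fin n) K) (hβ : ∀ α, β α ∈ pPowers K n p)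
    (hsa : s * a = ∑ α, β α * pMonomial f α) :
    ∃ β : (Fin m → Fin p) → MvPolynomial (Fin n) K, (∀ α, β α ∈ pPowers K n p) ∧
      a = ∑ α, β α * pMonomial f α := by
  induction s using (wellFounded_dvdNotUnit (α := MvPolynomial (Fin n) K)).induction generalizing β with
  | _ s ih =>
  by_cases hu : IsUnit s
  · obtain ⟨v, hv⟩ := hu.exists_right_inv
    have hvB : v ∈ pPowers K n p := mem_of_mul_mem hs hs0 (by rw [hv]; exact one_mem _)
    refine ⟨fun α => v * β α, fun α => mul_mem hvB (hβ α), ?_⟩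
    simp only [mul_assoc, ← Finset.mul_sum]
    rw [← hsa, ← mul_assoc, mul_comm v, hv, one_mul]
  · obtain ⟨q, hq, hqs⟩ := exists_prime hs0 hu
    obtain ⟨k, hk0, hkB, s', rfl⟩ := exists_pow_dvd hq hs hs0 hqs
    have hq0 : q ^ k ≠ 0 := pow_ne_zero _ hq.ne_zero
    have hs' : s' ∈ pPowers K n p := mem_of_mul_mem hkB hq0 hs
    have : ∃ j, ¬ q ∣ jacMinor f j := by
      by_contra! h
      exact hq.not_isUnit (h1 q h)
    obtain ⟨j, hj⟩ := this
    have h2 := multi_var (p := p) (jacMinor f j) (q ^ k)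
      (fun a h => hq.pow_dvd_of_dvd_mul_left k hj h) m (Dj f j) f (Dj_f f j)
      (fun i => der_eq_zero _ hkB) β (fun i α => der_eq_zero _ (hβ α))
      ⟨s' * a, by rw [← mul_assoc, hsa]; rfl⟩
    choose γ hγ using h2
    refine ih s' ⟨right_ne_zero_of_mul hs0, q ^ k, ?_, mul_comm _ _⟩ hs' (right_ne_zero_of_mul hs0) γ
      (fun α => mem_of_mul_mem hkB hq0 (by rw [← hγ]; exact hβ α)) ?_
    · rw [isUnit_pow_iff hk0]; exact hq.not_isUnit
    · apply mul_left_cancel₀ hq0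
      rw [← mul_assoc, hsa, Finset.mul_sum]
      refine Finset.sum_congr rfl fun α _ => ?_
      rw [hγ]; ring

theorem one_two [IsDomain K] [UniqueFactorizationMonoid K] [hp : Fact p.Prime] [CharP K p]
    (hn : 0 < n) (f : Fin m → MvPolynomial (Fin n) K)
    (h1 : ∀ g : MvPolynomial (Fin n) K, (∀ j : Fin m → Fin n, g ∣ jacMinor f j) → IsUnit g) :
    ∃ d : Derivation K (MvPolynomial (Fin n) K) (MvPolynomial (Fin n) K),
        IsPBasis (pPowers K n p) {a | d a = 0} p f := by
  have : ∃ j, jacMinor f j ≠ 0 := by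
    by_contra! h
    exact not_isUnit_zero (h1 0 (fun j => by rw [h j]))
  obtain ⟨j, hJ⟩ := this
  refine ⟨dd p f j ⟨0, hn⟩, fun b hb => der_eq_zero _ hb, fun α => ?_, ?_, ?_⟩
  · have := der_prod (dd p f j ⟨0, hn⟩) f (fun _ => 0) (fun i => by rw [dd_f]; simp) Finset.univ
      (fun i => (α i : ℕ))
    simpa [pMonomial] using this
  · intro b hb h α
    exact indep (p := p) (jacMinor f j) hJ (Dj f j) f (Dj_f f j) b hb h α
  · intro a ha
    obtain ⟨s, hs, hs0, hsa⟩ := dd_ker f j ⟨0, hn⟩ hJ ha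
    obtain ⟨β, hβ, -, h⟩ := closure_span (p := p) f _ hsa
    exact descend f h1 a s hs hs0 β hβ h
end onetwo2
section fieldder
open Polynomial in
theorem minpoly_p {ℓ : Type*} [Field ℓ] {p : ℕ} [hp : Fact p.Prime] [CharP ℓ p]
    (M : Subfield ℓ) {y : ℓ} (hyp : y ^ p ∈ M) (hy : y ∉ M) :
    minpoly M y = Polynomial.X ^ p - Polynomial.C (⟨y ^ p, hyp⟩ : M) := by
  symm
  apply minpoly.eq_of_irreducible_of_monic
  · refine X_pow_sub_C_irreducible_of_prime hp.out fun b hb => ?_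
    have h1 : (b : ℓ) ^ p = y ^ p := congrArg Subtype.val hb
    have h2 : (b : ℓ) = y := frobenius_inj ℓ p h1
    exact hy (h2 ▸ b.2)
  · simp only [map_sub, map_pow, Polynomial.aeval_X, Polynomial.aeval_C]
    exact sub_self _
  · exact monic_X_pow_sub_C _ hp.out.ne_zero

open Polynomial IntermediateField in
theorem exists_der {ℓ : Type*} [Field ℓ] {p : ℕ} [hp : Fact p.Prime] [CharP ℓ p]
    (F : Subfield ℓ) (hF : ∀ y, y ^ p ∈ F) {x : ℓ} (hx : x ∉ F) :
    ∃ D : Derivation ℤ ℓ ℓ, (∀ y ∈ F, D y = 0) ∧ D x = 1 := by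
  obtain ⟨M, hFM, hM⟩ := zorn_le_nonempty₀ {M : Subfield ℓ | x ∉ M} (by
    intro c hc hch y hy
    refine ⟨sSup c, ?_, fun z hz => le_sSup hz⟩
    intro h
    rw [Subfield.mem_sSup_of_directedOn ⟨y, hy⟩ hch.directedOn] at h
    obtain ⟨s, hs, hxs⟩ := h
    exact hc hs hxs) F hx
  have hxM : x ∉ M := hM.prop
  have hMp : ∀ y : ℓ, y ^ p ∈ M := fun y => hFM (hF y)
  have hIntegral : ∀ y : ℓ, IsIntegral M y := fun y =>
    ⟨Polynomial.X ^ p - Polynomial.C (⟨y ^ p, hMp y⟩ : M), monic_X_pow_sub_C _ hp.out.ne_zero, by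
      simp only [Polynomial.eval₂_sub, Polynomial.eval₂_pow, Polynomial.eval₂_X, Polynomial.eval₂_C]; exact sub_self _⟩
  have hdeg : ∀ y : ℓ, y ∉ M → Module.finrank M M⟮y⟯ = p := fun y hy => by
    rw [adjoin.finrank (hIntegral y), minpoly_p M (hMp y) hy, natDegree_X_pow_sub_C]
  have htop : ∀ y : ℓ, y ∈ M⟮x⟯ := by
    intro y
    by_cases hy : y ∈ M
    · exact (M⟮x⟯).algebraMap_mem ⟨y, hy⟩
    have hxy : x ∈ M⟮y⟯ := by
      by_contra h
      have h1 : M ≤ (M⟮y⟯).toSubfield := fun z hz => (M⟮y⟯).algebraMap_mem ⟨z, hz⟩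
      exact hy (hM.le_of_ge (y := (M⟮y⟯).toSubfield) h h1 (mem_adjoin_simple_self M y))
    have : FiniteDimensional M M⟮y⟯ := adjoin.finiteDimensional (hIntegral y)
    have h2 : M⟮x⟯ = M⟮y⟯ := eq_of_le_of_finrank_eq (adjoin_simple_le_iff.mpr hxy)
      (by rw [hdeg x hxM, hdeg y hy])
    rw [h2]; exact mem_adjoin_simple_self M y
  have hsurj : Function.Surjective (Polynomial.aeval x : M[X] →ₐ[M] ℓ) := by
    intro y
    have h := htop y
    rw [← mem_toSubalgebra, adjoin_simple_toSubalgebra_of_isAlgebraic (hIntegral x).isAlgebraic,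
      Algebra.adjoin_singleton_eq_range_aeval] at h
    exact h
  have hker : ∀ g : M[X], (Polynomial.aeval x : M[X] →ₐ[M] ℓ) g = 0 →
      (Polynomial.aeval x : M[X] →ₐ[M] ℓ) (derivative' (R := M) g) = 0 := by
    intro g hg
    obtain ⟨u, rfl⟩ := minpoly.dvd M x hg
    rw [minpoly_p M (hMp x) hxM]
    have h0 : derivative (Polynomial.X ^ p - Polynomial.C (⟨x ^ p, hMp x⟩ : M)) = 0 := by
      have : CharP M p := inferInstance
      rw [derivative_sub, derivative_C, derivative_X_pow, CharP.cast_eq_zero]; simp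
    change (Polynomial.aeval x : M[X] →ₐ[M] ℓ) (derivative _) = 0
    rw [derivative_mul, h0, zero_mul, zero_add, ← minpoly_p M (hMp x) hxM, map_mul, minpoly.aeval,
      zero_mul]
  let D : Derivation M ℓ ℓ := Derivation.liftOfSurjective hsurj hker
  have hDx : D x = 1 := by
    have := Derivation.liftOfSurjective_apply hsurj hker Polynomial.X
    rw [Polynomial.aeval_X] at this
    rw [this]
    change (Polynomial.aeval x : M[X] →ₐ[M] ℓ) (derivative Polynomial.X) = 1
    simp
  refine ⟨D.restrictScalars ℤ, fun y hy => ?_, hDx⟩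
  exact D.map_algebraMap ⟨y, hFM hy⟩

end fieldder
section threeone
variable {K : Type*} [CommRing K] {n p m : ℕ} {ℓ : Type*} [Field ℓ]
  [Algebra (MvPolynomial (Fin n) K) ℓ] [Algebra K ℓ] [IsScalarTower K (MvPolynomial (Fin n) K) ℓ]

theorem der_expand (E : Derivation K (MvPolynomial (Fin n) K) ℓ) (a : MvPolynomial (Fin n) K) :
    E a = ∑ l, E (X l) * algebraMap _ ℓ (pderiv l a) := by
  induction a using MvPolynomial.induction_on with
  | C a =>
    have : E (C a) = 0 := E.map_algebraMap a
    simp [this]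
  | add a b ha hb => simp only [map_add, ha, hb, mul_add, Finset.sum_add_distrib]
  | mul_X a i ha =>
    rw [Derivation.leibniz, ha]
    simp only [Derivation.leibniz, Algebra.smul_def, smul_eq_mul, map_add, map_mul, mul_add,
      Finset.sum_add_distrib, pderiv_X]
    congr 1
    · rw [Finset.sum_eq_single i]
      · simp [mul_comm]
      · intro l _ hl
        simp [Pi.single_apply, Ne.symm hl]
      · simp
    · rw [Finset.mul_sum]
      exact Finset.sum_congr rfl fun l _ => by rw [Algebra.algebraMap_self_apply]; ring

theorem minor_ne (f : Fin m → MvPolynomial (Fin n) K)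
    (E : Fin m → Derivation K (MvPolynomial (Fin n) K) ℓ)
    (h : ∀ t : Fin m → ℓ, (∀ k, ∑ j, t j * E j (f k) = 0) → t = 0) :
    ∃ j : Fin m → Fin n, algebraMap _ ℓ (jacMinor f j) ≠ 0 := by
  classical
  by_contra! H
  let G : Matrix (Fin m) (Fin m) ℓ := Matrix.of fun k j => E j (f k)
  have hG : G.det = 0 := by
    rw [← Matrix.det_transpose]
    have h1 : G.transpose = fun j => ∑ l : Fin n, E j (X l) • (fun k => algebraMap _ ℓ (pderiv l (f k))) := by
      ext j k
      rw [Matrix.transpose_apply, Finset.sum_apply]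
      simp only [G, Matrix.of_apply, Pi.smul_apply, smul_eq_mul]
      exact der_expand _ _
    rw [h1]
    change Matrix.detRowAlternating.toMultilinearMap _ = 0
    rw [MultilinearMap.map_sum]
    refine Finset.sum_eq_zero fun r _ => ?_
    rw [MultilinearMap.map_smul_univ]
    have h2 : Matrix.detRowAlternating.toMultilinearMap
        (fun j k => algebraMap (MvPolynomial (Fin n) K) ℓ (pderiv (r j) (f k))) = 0 := by
      rw [← H r, jacMinor, RingHom.map_det, ← Matrix.det_transpose]
      rfl
    rw [h2, smul_zero]
  obtain ⟨v, hv, hv0⟩ := Matrix.exists_mulVec_eq_zero_iff.mpr hG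
  refine hv (h v fun k => ?_)
  have := congrFun hv0 k
  simpa [Matrix.mulVec, dotProduct, G, mul_comm] using this

theorem frac_mem (R : Subring (MvPolynomial (Fin n) K)) (x : MvPolynomial (Fin n) K)
    (h : algebraMap _ ℓ x ∈ Subfield.closure (algebraMap (MvPolynomial (Fin n) K) ℓ '' R)) :
    ∃ b ∈ R, ∃ c ∈ R, algebraMap _ ℓ b ≠ 0 ∧ algebraMap _ ℓ (b * x + c) = 0 := by
  rw [Subfield.mem_closure_iff] at h
  rw [← Subring.coe_map, Subring.closure_eq] at h
  obtain ⟨_, ⟨r, hr, rfl⟩, _, ⟨s, hs, rfl⟩, h⟩ := h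
  by_cases h0 : algebraMap _ ℓ s = 0
  · refine ⟨1, one_mem _, 0, zero_mem _, by simp, ?_⟩
    rw [h0, div_zero] at h
    simp [← h]
  · refine ⟨s, hs, -r, neg_mem hr, h0, ?_⟩
    rw [map_add, map_mul, ← h, mul_div_cancel₀ _ h0]; simp

theorem coprime_adjust [IsDomain K] [UniqueFactorizationMonoid K] [hp : Fact p.Prime] [CharP K p]
    (R : Subring (MvPolynomial (Fin n) K)) (hR : pPowers K n p ≤ R)
    {q b c x : MvPolynomial (Fin n) K} (hq : Prime q) (hc : c ∈ R) (hqb : ¬ q ∣ b)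
    (hqx : q ∣ b * x + c) : ∃ c' ∈ R, IsRelPrime b c' ∧ q ∣ b * x + c' := by
  classical
  have hb0 : b ≠ 0 := by rintro rfl; exact hqb (dvd_zero _)
  let v := ((UniqueFactorizationMonoid.factors b).filter fun r => ¬ r ∣ c).prod
  refine ⟨c + q ^ p * v ^ p, add_mem hc (mul_mem (hR (pow_mem' _)) (hR (pow_mem' _))), ?_, ?_⟩
  · intro d hdb hdc
    by_contra hd
    have hd0 : d ≠ 0 := by rintro rfl; exact hb0 (zero_dvd_iff.mp hdb)
    obtain ⟨r, hr, hrd⟩ := exists_prime hd0 hd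
    have hrb := hrd.trans hdb
    have hrc := hrd.trans hdc
    by_cases h : r ∣ c
    · have h1 := (dvd_add_right h).mp hrc
      rcases hr.dvd_or_dvd h1 with h2 | h2
      · have h3 := (hr.dvd_prime_iff_associated hq).mp (hr.dvd_of_dvd_pow h2)
        exact hqb (h3.symm.dvd.trans hrb)
      · have h3 := hr.dvd_of_dvd_pow h2
        obtain ⟨s, hs, hrs⟩ := hr.exists_mem_multiset_dvd h3
        rw [Multiset.mem_filter] at hs
        have h4 := (hr.dvd_prime_iff_associated
          (UniqueFactorizationMonoid.prime_of_factor s hs.1)).mp hrs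
        exact hs.2 (h4.symm.dvd.trans h)
    · obtain ⟨s, hs, hrs⟩ := UniqueFactorizationMonoid.exists_mem_factors_of_dvd hb0 hr.irreducible hrb
      have h1 : s ∣ v := Multiset.dvd_prod (Multiset.mem_filter.mpr
        ⟨hs, fun h' => h (hrs.dvd.trans h')⟩)
      have h2 : r ∣ q ^ p * v ^ p :=
        ((hrs.dvd.trans h1).trans (dvd_pow_self v hp.out.ne_zero)).mul_left _
      exact h ((dvd_add_left h2).mp hrc)
  · rw [← add_assoc]
    exact dvd_add hqx ((dvd_pow_self q hp.out.ne_zero).mul_right _)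

theorem pow_mem_closure [IsDomain K] [hp : Fact p.Prime] [CharP K p]
    (hfrac : ∀ x : ℓ, ∃ a b : MvPolynomial (Fin n) K, algebraMap _ ℓ a / algebraMap _ ℓ b = x)
    (R : Subring (MvPolynomial (Fin n) K)) (hR : pPowers K n p ≤ R) (x : ℓ) :
    x ^ p ∈ Subfield.closure (algebraMap (MvPolynomial (Fin n) K) ℓ '' R) := by
  obtain ⟨a, b, rfl⟩ := hfrac x
  rw [div_pow, ← map_pow, ← map_pow]
  exact div_mem (Subfield.subset_closure ⟨_, hR (pow_mem' _), rfl⟩)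
    (Subfield.subset_closure ⟨_, hR (pow_mem' _), rfl⟩)

/-- a derivation of `A` to `ℓ` killing `R` with value `1` on `x`. -/
theorem exists_E [IsDomain K] [hp : Fact p.Prime] [CharP K p] [CharP ℓ p]
    (hfrac : ∀ x : ℓ, ∃ a b : MvPolynomial (Fin n) K, algebraMap _ ℓ a / algebraMap _ ℓ b = x)
    (R : Subring (MvPolynomial (Fin n) K)) (hR : pPowers K n p ≤ R) (x : MvPolynomial (Fin n) K)
    (hx : algebraMap _ ℓ x ∉ Subfield.closure (algebraMap (MvPolynomial (Fin n) K) ℓ '' R)) :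
    ∃ E : Derivation K (MvPolynomial (Fin n) K) ℓ, (∀ r ∈ R, E r = 0) ∧ E x = 1 ∧
      ∀ a, algebraMap _ ℓ a = 0 → E a = 0 := by
  obtain ⟨D, hD, hDx⟩ := exists_der _ (pow_mem_closure hfrac R hR) hx
  refine ⟨Derivation.mk'
    { toFun := fun a => D (algebraMap _ ℓ a)
      map_add' := fun a b => by simp
      map_smul' := fun c a => ?_ } ?_, fun r hr => ?_, hDx, fun a ha => ?_⟩
  · have h0 : D (algebraMap _ ℓ (C c : MvPolynomial (Fin n) K)) = 0 :=
      hD _ (Subfield.subset_closure ⟨_, hR (C_mem _), rfl⟩)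
    rw [smul_eq_C_mul, map_mul, Derivation.leibniz, h0, RingHom.id_apply,
      ← algebraMap_smul (MvPolynomial (Fin n) K) c (D _), ← algebraMap_eq]
    simp [Algebra.smul_def]
  · intro a b
    simp only [LinearMap.coe_mk, AddHom.coe_mk, map_mul, Derivation.leibniz, smul_eq_mul,
      Algebra.smul_def]
  · exact hD _ (Subfield.subset_closure ⟨_, hr, rfl⟩)
  · change D (algebraMap _ ℓ a) = 0
    rw [ha, map_zero]

theorem der_closure [CharP K p] (f : Fin m → MvPolynomial (Fin n) K)
    (E : Derivation K (MvPolynomial (Fin n) K) ℓ) (I : Set (Fin m)) (hE : ∀ k ∈ I, E (f k) = 0)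
    {r : MvPolynomial (Fin n) K} (hr : r ∈ Subring.closure (↑(pPowers K n p) ∪ (f '' I))) :
    E r = 0 := by
  induction hr using Subring.closure_induction with
  | mem x hx =>
    rcases hx with hx | ⟨k, hk, rfl⟩
    · exact der_eq_zero E hx
    · exact hE k hk
  | zero => simp
  | one => simp
  | add x y _ _ hx hy => simp [hx, hy]
  | neg x _ hx => simp [hx]
  | mul x y _ _ hx hy => simp [hx, hy]

end threeone
section threeone2
variable {K : Type*} [CommRing K] {n p m : ℕ} {ℓ : Type*} [Field ℓ]
  [Algebra (MvPolynomial (Fin n) K) ℓ] [Algebra K ℓ] [IsScalarTower K (MvPolynomial (Fin n) K) ℓ]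

theorem B_le_Ri (f : Fin m → MvPolynomial (Fin n) K) (i : Fin m) :
    pPowers K n p ≤ Ri K p f i := fun _ hx => Subring.subset_closure (Set.mem_union_left _ hx)

theorem B_le_Rij (f : Fin m → MvPolynomial (Fin n) K) (i j : Fin m) :
    pPowers K n p ≤ Rij K p f i j := fun _ hx => Subring.subset_closure (Set.mem_union_left _ hx)

theorem exists_coprime [IsDomain K] [UniqueFactorizationMonoid K] [hp : Fact p.Prime] [CharP K p]
    {q : MvPolynomial (Fin n) K} (hq : Prime q)
    (hπ : ∀ a : MvPolynomial (Fin n) K, algebraMap _ ℓ a = 0 ↔ q ∣ a)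
    (R : Subring (MvPolynomial (Fin n) K)) (hR : pPowers K n p ≤ R) (x : MvPolynomial (Fin n) K)
    (h : algebraMap _ ℓ x ∈ Subfield.closure (algebraMap (MvPolynomial (Fin n) K) ℓ '' R)) :
    ∃ b ∈ R, ∃ c ∈ R, b ≠ 0 ∧ IsRelPrime b c ∧ q ∣ b * x + c := by
  obtain ⟨b, hb, c, hc, hb0, h1⟩ := frac_mem R x h
  have hqb : ¬ q ∣ b := fun h => hb0 ((hπ b).mpr h)
  obtain ⟨c', hc', h2, h3⟩ := coprime_adjust R hR hq hc hqb ((hπ _).mp h1)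
  exact ⟨b, hb, c', hc', by rintro rfl; exact hqb (dvd_zero _), h2, h3⟩

theorem three_one_aux [IsDomain K] [UniqueFactorizationMonoid K] [hp : Fact p.Prime] [CharP K p]
    [CharP ℓ p] {q : MvPolynomial (Fin n) K} (hq : Prime q)
    (hπ : ∀ a : MvPolynomial (Fin n) K, algebraMap _ ℓ a = 0 ↔ q ∣ a)
    (hfrac : ∀ x : ℓ, ∃ a b : MvPolynomial (Fin n) K, algebraMap _ ℓ a / algebraMap _ ℓ b = x)
    (f : Fin m → MvPolynomial (Fin n) K)
    (h3 : ∀ i : Fin m, ∀ b c : MvPolynomial (Fin n) K,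
          b ∈ Ri K p f i → c ∈ Ri K p f i → b ≠ 0 → IsRelPrime b c →
          Squarefree (b * f i + c) ∧ BFree (pPowers K n p) (b * f i + c))
    (h3' : 1 < m → ∀ i j : Fin m, i ≠ j →
          ∀ b₁ b₂ c₁ c₂ : MvPolynomial (Fin n) K,
          b₁ ∈ Rij K p f i j → b₂ ∈ Rij K p f i j →
          c₁ ∈ Rij K p f i j → c₂ ∈ Rij K p f i j →
          b₁ ≠ 0 → b₂ ≠ 0 → IsRelPrime b₁ c₁ → IsRelPrime b₂ c₂ →
          IsRelPrime (b₁ * f i + c₁) (b₂ * f j + c₂)) :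
    ∃ j : Fin m → Fin n, algebraMap _ ℓ (jacMinor f j) ≠ 0 := by
  classical
  by_cases hA : ∀ i, algebraMap _ ℓ (f i) ∉
      Subfield.closure (algebraMap (MvPolynomial (Fin n) K) ℓ '' (Ri K p f i))
  · have := fun i => exists_E hfrac (Ri K p f i) (B_le_Ri f i) (f i) (hA i)
    choose E hE hE1 _ using this
    refine minor_ne f E fun t ht => ?_
    ext k
    have h := ht k
    rw [Finset.sum_eq_single k] at h
    · simpa [hE1] using h
    · intro j _ hj
      rw [hE j (f k) (f_mem_Ri (Ne.symm hj)), mul_zero]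
    · simp
  push Not at hA
  obtain ⟨i, hi⟩ := hA
  by_cases hB : ∃ j, j ≠ i ∧ algebraMap _ ℓ (f j) ∈
      Subfield.closure (algebraMap (MvPolynomial (Fin n) K) ℓ '' (Rij K p f i j))
  · exfalso
    obtain ⟨j, hji, hj⟩ := hB
    have hi' : algebraMap _ ℓ (f i) ∈
        Subfield.closure (algebraMap (MvPolynomial (Fin n) K) ℓ '' (Rij K p f i j)) := by
      refine (Subfield.closure_le.mpr ?_) hi
      rintro _ ⟨r, hr, rfl⟩
      have hle : Ri K p f i ≤ (Subfield.closure (algebraMap (MvPolynomial (Fin n) K) ℓ ''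
          (Rij K p f i j))).toSubring.comap (algebraMap _ ℓ) := by
        refine Subring.closure_le.mpr ?_
        rintro x (hx | ⟨k, hk, rfl⟩)
        · exact Subfield.subset_closure ⟨x, B_le_Rij f i j hx, rfl⟩
        · by_cases hkj : k = j
          · subst hkj; exact hj
          · exact Subfield.subset_closure ⟨_, Subring.subset_closure
              (Set.mem_union_right _ ⟨k, ⟨hk, hkj⟩, rfl⟩), rfl⟩
      exact hle hr
    obtain ⟨b₁, hb₁, c₁, hc₁, hb₁0, hr₁, hq₁⟩ :=
      exists_coprime hq hπ _ (B_le_Rij f i j) (f i) hi'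
    obtain ⟨b₂, hb₂, c₂, hc₂, hb₂0, hr₂, hq₂⟩ :=
      exists_coprime hq hπ _ (B_le_Rij f i j) (f j) hj
    have hm : 1 < m := by
      have h1 := i.2
      have h2 := j.2
      have h4 : (j : ℕ) ≠ i := fun h => hji (Fin.ext h)
      omega
    exact hq.not_isUnit (h3' hm i j (Ne.symm hji) b₁ b₂ c₁ c₂ hb₁ hb₂ hc₁ hc₂ hb₁0 hb₂0 hr₁ hr₂
      hq₁ hq₂)
  push Not at hB
  obtain ⟨b, hb, c, hc, hb0, hr, hqw⟩ := exists_coprime hq hπ _ (B_le_Ri f i) (f i) hi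
  obtain ⟨hsq, hBf⟩ := h3 i b c hb hc hb0 hr
  have hqB : ∃ l, pderiv l q ≠ 0 := by
    by_contra! h
    exact hq.not_isUnit (hBf q (mem_of_pderiv h) hqw)
  obtain ⟨l, hl⟩ := hqB
  have hdw : algebraMap _ ℓ (pderiv l (b * f i + c)) ≠ 0 := by
    obtain ⟨u, hu⟩ := hqw
    rw [hu, Derivation.leibniz]
    simp only [smul_eq_mul, map_add, map_mul, (hπ q).mpr dvd_rfl, zero_mul, zero_add]
    refine mul_ne_zero (fun h => ?_) (fun h => not_dvd_pderiv l hl ((hπ _).mp h))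
    obtain ⟨v, rfl⟩ := (hπ _).mp h
    exact hq.not_isUnit (hsq q ⟨v, by rw [hu]; ring⟩)
  have hEx : ∀ j, ∃ E : Derivation K (MvPolynomial (Fin n) K) ℓ,
      (j = i → E = (Algebra.linearMap (MvPolynomial (Fin n) K) ℓ).compDer (pderiv l)) ∧
      (j ≠ i → (∀ r ∈ Rij K p f i j, E r = 0) ∧ E (f j) = 1 ∧ ∀ a, algebraMap _ ℓ a = 0 → E a = 0) := by
    intro j
    by_cases hj : j = i
    · exact ⟨_, fun _ => rfl, fun h => absurd hj h⟩
    · obtain ⟨E, hE⟩ := exists_E hfrac (Rij K p f i j) (B_le_Rij f i j) (f j) (hB j hj)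
      exact ⟨E, fun h => absurd h hj, fun _ => hE⟩
  choose E hEi hEj using hEx
  refine minor_ne f E fun t ht => ?_
  have hsum : ∀ a, (∑ j, t j • E j) a = ∑ j, t j * E j a := by
    intro a
    simp only [← Derivation.coeFnAddMonoidHom_apply, map_sum, Finset.sum_apply]
    simp
  have hk : ∀ k, (∑ j, t j • E j) (f k) = 0 := fun k => by rw [hsum]; exact ht k
  have hw : (∑ j, t j • E j) (b * f i + c) = 0 := by
    have h1 := der_closure (p := p) f (∑ j, t j • E j) {k | k ≠ i} (fun k _ => hk k) hb
    have h2 := der_closure (p := p) f (∑ j, t j • E j) {k | k ≠ i} (fun k _ => hk k) hc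
    rw [map_add, Derivation.leibniz, h1, h2, hk i]
    simp
  have hti : t i = 0 := by
    rw [hsum, Finset.sum_eq_single i] at hw
    · rw [hEi i rfl] at hw
      exact (mul_eq_zero.mp hw).resolve_right hdw
    · intro j _ hj
      rw [(hEj j hj).2.2 _ ((hπ _).mpr hqw), mul_zero]
    · simp
  ext k
  by_cases hki : k = i
  · rw [hki]; exact hti
  have h := ht k
  rw [Finset.sum_eq_single k] at h
  · simpa [(hEj k hki).2.1] using h
  · intro j _ hj
    by_cases hji : j = i
    · rw [hji, hti, zero_mul]
    · rw [(hEj j hji).1 (f k) (Subring.subset_closure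
        (Set.mem_union_right _ ⟨k, ⟨hki, Ne.symm hj⟩, rfl⟩)), mul_zero]
  · simp

end threeone2

theorem three_one {K : Type*} [CommRing K] {n p m : ℕ}
    [IsDomain K] [UniqueFactorizationMonoid K] [hp : Fact p.Prime] [CharP K p] (hn : 0 < n)
    (f : Fin m → MvPolynomial (Fin n) K)
    (h3 : ∀ i : Fin m, ∀ b c : MvPolynomial (Fin n) K,
          b ∈ Ri K p f i → c ∈ Ri K p f i → b ≠ 0 → IsRelPrime b c →
          Squarefree (b * f i + c) ∧ BFree (pPowers K n p) (b * f i + c))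
    (h3' : 1 < m → ∀ i j : Fin m, i ≠ j →
          ∀ b₁ b₂ c₁ c₂ : MvPolynomial (Fin n) K,
          b₁ ∈ Rij K p f i j → b₂ ∈ Rij K p f i j →
          c₁ ∈ Rij K p f i j → c₂ ∈ Rij K p f i j →
          b₁ ≠ 0 → b₂ ≠ 0 → IsRelPrime b₁ c₁ → IsRelPrime b₂ c₂ →
          IsRelPrime (b₁ * f i + c₁) (b₂ * f j + c₂))
    (g : MvPolynomial (Fin n) K) (hg : ∀ j : Fin m → Fin n, g ∣ jacMinor f j) : IsUnit g := by
  by_contra hu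
  have : ∃ q, Prime q ∧ q ∣ g := by
    by_cases h0 : g = 0
    · exact ⟨X ⟨0, hn⟩, X_prime, h0 ▸ dvd_zero _⟩
    · exact exists_prime h0 hu
  obtain ⟨q, hq, hqg⟩ := this
  have hI : (Ideal.span {q}).IsPrime := (Ideal.span_singleton_prime hq.ne_zero).mpr hq
  have hdom : IsDomain (MvPolynomial (Fin n) K ⧸ Ideal.span {q}) := Ideal.Quotient.isDomain _
  have hπ : ∀ a : MvPolynomial (Fin n) K,
      algebraMap _ (FractionRing (MvPolynomial (Fin n) K ⧸ Ideal.span {q})) a = 0 ↔ q ∣ a := by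
    intro a
    rw [IsScalarTower.algebraMap_apply _ (MvPolynomial (Fin n) K ⧸ Ideal.span {q}),
      FaithfulSMul.algebraMap_eq_zero_iff, Ideal.Quotient.algebraMap_eq, Ideal.Quotient.eq_zero_iff_mem,
      Ideal.mem_span_singleton]
  have hch : CharP (FractionRing (MvPolynomial (Fin n) K ⧸ Ideal.span {q})) p := by
    refine (CharP.charP_iff_prime_eq_zero hp.out).mpr ?_
    rw [← map_natCast (algebraMap (MvPolynomial (Fin n) K) _), CharP.cast_eq_zero, map_zero]
  obtain ⟨j, hj⟩ := three_one_aux (p := p)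
    (ℓ := FractionRing (MvPolynomial (Fin n) K ⧸ Ideal.span {q})) hq hπ (fun x => by
      obtain ⟨a, b, -, h⟩ := IsFractionRing.div_surjective
        (A := MvPolynomial (Fin n) K ⧸ Ideal.span {q}) x
      obtain ⟨a, rfl⟩ := Ideal.Quotient.mk_surjective a
      obtain ⟨b, rfl⟩ := Ideal.Quotient.mk_surjective b
      exact ⟨a, b, h⟩) f h3 h3'
  exact hj ((hπ _).mpr (hqg.trans (hg j)))

end PB

/-- **Theorem 2 (main theorem).** Characterization of `p`-bases of rings of constants of
polynomial derivations over a UFD `K` of characteristic `p > 0`. -/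
theorem pBasis_of_ring_of_constants_tfae
    {K : Type*} [CommRing K] [IsDomain K] [UniqueFactorizationMonoid K]
    (p : ℕ) (hp : 0 < p) [CharP K p] {n m : ℕ} (hm : 1 ≤ m) (hmn : m ≤ n)
    (f : Fin m → MvPolynomial (Fin n) K) :
    List.TFAE [
      -- (1) `dgcd(f₁,…,f_m) ∼ 1`: every common divisor of all `m×m` jacobian minors is a unit
      (∀ g : MvPolynomial (Fin n) K,
        (∀ j : Fin m → Fin n, g ∣ jacMinor f j) → IsUnit g),
      -- (2) `f₁,…,f_m` form a `p`-basis over `B` of the ring of constants of some `K`-derivation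
      (∃ d : Derivation K (MvPolynomial (Fin n) K) (MvPolynomial (Fin n) K),
        IsPBasis (pPowers K n p) {a | d a = 0} p f),
      -- (3) the square-free/`B`-free and coprimality conditions
      ((∀ i : Fin m, ∀ b c : MvPolynomial (Fin n) K,
          b ∈ Ri K p f i → c ∈ Ri K p f i → b ≠ 0 → IsRelPrime b c →
          Squarefree (b * f i + c) ∧ BFree (pPowers K n p) (b * f i + c)) ∧
       (1 < m → ∀ i j : Fin m, i ≠ j →
          ∀ b₁ b₂ c₁ c₂ : MvPolynomial (Fin n) K,
          b₁ ∈ Rij K p f i j → b₂ ∈ Rij K p f i j →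
          c₁ ∈ Rij K p f i j → c₂ ∈ Rij K p f i j →
          b₁ ≠ 0 → b₂ ≠ 0 → IsRelPrime b₁ c₁ → IsRelPrime b₂ c₂ →
          IsRelPrime (b₁ * f i + c₁) (b₂ * f j + c₂)))] := by
  have hpr : Fact p.Prime := ⟨(CharP.char_is_prime_or_zero K p).resolve_right hp.ne'⟩
  have hn : 0 < n := by omega
  tfae_have 1 → 2 := fun h => PB.one_two hn f h
  tfae_have 2 → 3 := fun ⟨d, hd⟩ => PB.two_three hd
  tfae_have 3 → 1 := fun ⟨h, h'⟩ g hg => PB.three_one hn f h h' g hg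
  tfae_finish
end

section
/- Let K be a UFD of characteristic p > 0, let A = K[x_1,…,x_n] be the polynomial algebra, B = K[x_1^p,…,x_n^p], and let f_1,…,f_m ∈ A with 1 ≤ m ≤ n. If every common divisor of all m×m jacobian minors jac^{f_1,…,f_m}_{j_1,…,j_m}, j_1,…,j_m ∈ {1,…,n}, is invertible (i.e., dgcd(f_1,…,f_m) is a unit), then f_1,…,f_m form a p-basis over B of the ring of constants of some K-derivation of A. -/
open MvPolynomial

namespace PB

theorem chain {K A ι : Type*} [CommRing K] [CommRing A] [Algebra K A] [Fintype ι] [DecidableEq ι]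
    (ϕ : A →+* A) (F : ι → A) (E : ι → Derivation K A A) (D : A)
    (hE : ∀ i k, E i (F k) = if i = k then D else 0) (hϕ : ∀ i a, E i (ϕ a) = 0)
    (P : MvPolynomial ι A) (i : ι) :
    E i (eval₂ ϕ F P) = D * eval₂ ϕ F (pderiv i P) := by
  induction P using MvPolynomial.induction_on with
  | C a => simp [hϕ]
  | add P Q hP hQ => simp [hP, hQ, mul_add]
  | mul_X P k hP =>
    rw [pderiv_mul]
    simp only [eval₂_mul, eval₂_add, eval₂_X, Derivation.leibniz, hP, hE, pderiv_X, smul_eq_mul]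
    by_cases h : i = k
    · subst h; simp; ring
    · rw [Pi.single_eq_of_ne (Ne.symm h)]; simp [h]; ring

theorem gen {K A ι : Type*} [CommRing K] [CommRing A] [Algebra K A] [Fintype ι] [DecidableEq ι]
    (ϕ : A →+* A) (F : ι → A) (E : ι → Derivation K A A) (D : A)
    (hE : ∀ i k, E i (F k) = if i = k then D else 0) (hϕ : ∀ i a, E i (ϕ a) = 0)
    (p : ℕ) (hunit : ∀ k : ℕ, 0 < k → k < p → IsUnit (k : A))
    (q : A) (hq : ∀ i, E i q = 0) (hD : ∀ c, q ∣ D * c → q ∣ c) (N : ℕ) :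
    ∀ (P : MvPolynomial ι A), (∀ α, coeff α P ≠ 0 → α.degree < N) →
      (∀ α, coeff α P ≠ 0 → ∀ i, α i < p) → q ∣ eval₂ ϕ F P → ∀ α, q ∣ ϕ (coeff α P) := by
  induction N with
  | zero =>
    intro P h1 _ _ α
    have : coeff α P = 0 := by
      by_contra hc
      exact absurd (h1 α hc) (by simp)
    simp [this]
  | succ N ih =>
    intro P h1 h2 h3
    have key : ∀ α, α ≠ 0 → q ∣ ϕ (coeff α P) := by
      intro α hα
      by_cases hc : coeff α P = 0
      · simp [hc]
      obtain ⟨i, hi⟩ : ∃ i, α i ≠ 0 := by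
        by_contra hcon
        push Not at hcon
        exact hα (Finsupp.ext hcon)
      have hd : q ∣ eval₂ ϕ F (pderiv i P) := by
        apply hD
        rw [← chain ϕ F E D hE hϕ]
        obtain ⟨c, hc⟩ := h3
        rw [hc, Derivation.leibniz, hq]
        simp
      have h4 := ih (pderiv i P) (fun β hβ => ?_) (fun β hβ k => ?_) hd (α - Finsupp.single i 1)
      · rw [coeff_pderiv, Finsupp.sub_add_single_one_cancel hi] at h4
        have h5 : (((α - Finsupp.single i 1 : ι →₀ ℕ) i : ℕ) : A) + 1 = ((α i : ℕ) : A) := by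
          have : (α - Finsupp.single i 1 : ι →₀ ℕ) i + 1 = α i := by
            simp; omega
          rw [← this]; push_cast; rfl
        rw [h5, map_mul, map_natCast] at h4
        exact ((hunit (α i) (Nat.pos_of_ne_zero hi) (h2 α hc i)).dvd_mul_right).1 h4
      · rw [coeff_pderiv] at hβ
        have := h1 _ (left_ne_zero_of_mul hβ)
        simp at this
        omega
      · rw [coeff_pderiv] at hβ
        have := h2 _ (left_ne_zero_of_mul hβ) k
        simp at this
        omega
    intro α
    by_cases hα : α = 0
    · subst hα
      rw [eval₂_eq'] at h3
      have h6 : ∑ d ∈ P.support, ϕ (coeff d P) * ∏ i, F i ^ d i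
          = ϕ (coeff 0 P) + ∑ d ∈ P.support.erase 0, ϕ (coeff d P) * ∏ i, F i ^ d i := by
        by_cases h0 : (0 : ι →₀ ℕ) ∈ P.support
        · rw [← Finset.add_sum_erase _ _ h0]; simp
        · rw [Finset.erase_eq_of_notMem h0, notMem_support_iff.1 h0]; simp
      rw [h6] at h3
      refine (dvd_add_left (Finset.dvd_sum ?_)).1 h3
      intro d hd
      exact Dvd.dvd.mul_right (key d (Finset.ne_of_mem_erase hd)) _
    · exact key α hα

/-- the family version -/
theorem genFam {K A ι : Type*} [CommRing K] [CommRing A] [Algebra K A] [Fintype ι] [DecidableEq ι]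
    (ϕ : A →+* A) (F : ι → A) (E : ι → Derivation K A A) (D : A)
    (hE : ∀ i k, E i (F k) = if i = k then D else 0) (hϕ : ∀ i a, E i (ϕ a) = 0)
    (p : ℕ) (hunit : ∀ k : ℕ, 0 < k → k < p → IsUnit (k : A))
    (q : A) (hq : ∀ i, E i q = 0) (hD : ∀ c, q ∣ D * c → q ∣ c)
    (b : (ι → Fin p) → A) (hb : q ∣ ∑ α, ϕ (b α) * ∏ i, F i ^ (α i : ℕ)) (α : ι → Fin p) :
    q ∣ ϕ (b α) := by
  classical
  let T : (ι → Fin p) → (ι →₀ ℕ) := fun α => Finsupp.equivFunOnFinite.symm fun i => (α i : ℕ)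
  have hT : Function.Injective T := by
    intro a b hab
    funext i
    have := DFunLike.congr_fun hab i
    exact Fin.ext this
  let P : MvPolynomial ι A := ∑ α, monomial (T α) (b α)
  have hc : ∀ β, coeff β P = ∑ α, if T α = β then b α else 0 := by
    intro β; simp [P, coeff_sum, coeff_monomial]
  have hc1 : ∀ α, coeff (T α) P = b α := by
    intro α; rw [hc]; simp [hT.eq_iff]
  have hc2 : ∀ β, coeff β P ≠ 0 → ∃ α, T α = β := by
    intro β hβ
    by_contra hcon
    push Not at hcon
    apply hβ
    rw [hc]
    exact Finset.sum_eq_zero fun α _ => by simp [hcon α]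
  have := gen ϕ F E D hE hϕ p hunit q hq hD ((Finset.univ.sup fun α => (T α).degree) + 1) P ?_ ?_ ?_ (T α)
  · rwa [hc1] at this
  · intro β hβ
    obtain ⟨α, rfl⟩ := hc2 β hβ
    exact Nat.lt_succ_of_le (Finset.le_sup (f := fun α => (T α).degree) (Finset.mem_univ α))
  · intro β hβ i
    obtain ⟨α, rfl⟩ := hc2 β hβ
    exact (α i).2
  · convert hb using 1
    simp only [P, eval₂_sum, eval₂_monomial]
    refine Finset.sum_congr rfl fun α _ => ?_
    rw [Finsupp.prod_fintype _ _ (by simp)]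
    rfl

theorem unit_nat {A : Type*} [CommRing A] (p : ℕ) (hp : p.Prime) [CharP A p] (k : ℕ) (h0 : 0 < k)
    (hk : k < p) : IsUnit (k : A) :=
  (CharP.isUnit_natCast_iff hp).2 (Nat.not_dvd_of_pos_of_lt h0 hk)

theorem exists_E_s1 {K : Type*} [CommRing K] {n : ℕ} {ι : Type*} [Fintype ι] [DecidableEq ι]
    (F : ι → MvPolynomial (Fin n) K) (e : ι → Fin n) :
    ∃ E : ι → Derivation K (MvPolynomial (Fin n) K) (MvPolynomial (Fin n) K),
      ∀ i k, E i (F k) = if i = k then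
        (Matrix.of fun i l => pderiv (e l) (F i) : Matrix ι ι (MvPolynomial (Fin n) K)).det else 0 := by
  set M := (Matrix.of fun i l => pderiv (e l) (F i) : Matrix ι ι (MvPolynomial (Fin n) K)) with hM
  refine ⟨fun i => ∑ l, M.adjugate l i • pderiv (e l), fun i k => ?_⟩
  have := congr_fun (congr_fun M.mul_adjugate k) i
  rw [Matrix.mul_apply, Matrix.smul_apply, Matrix.one_apply] at this
  rw [← Derivation.coeFnAddMonoidHom_apply, map_sum, Finset.sum_apply]
  simp only [Derivation.coeFnAddMonoidHom_apply, Derivation.smul_apply, smul_eq_mul]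
  have h2 : (if i = k then M.det else 0) = M.det • (if k = i then (1 : MvPolynomial (Fin n) K) else 0) := by
    simp [eq_comm]
  rw [h2, ← this]
  exact Finset.sum_congr rfl fun l _ => by rw [mul_comm]; rfl

theorem mem_pPowers {K : Type*} [CommRing K] {n p : ℕ} (x : MvPolynomial (Fin n) K) :
    x ∈ pPowers K n p ↔ ∃ r, expand p r = x := by
  unfold pPowers
  rw [Algebra.adjoin_range_eq_range_aeval]
  rfl

theorem der_expand_s1 {K : Type*} [CommRing K] {n p : ℕ} [CharP K p]
    (d : Derivation K (MvPolynomial (Fin n) K) (MvPolynomial (Fin n) K))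
    (r : MvPolynomial (Fin n) K) : d (expand p r) = 0 := by
  induction r using MvPolynomial.induction_on with
  | C a => rw [expand_C]; exact derivation_C d a
  | add P Q hP hQ => simp [hP, hQ]
  | mul_X P k hP => rw [map_mul, Derivation.leibniz, hP, expand_X, Derivation.leibniz_pow]; simp

theorem pow_char {K : Type*} [CommRing K] {n p : ℕ} [Fact p.Prime] [CharP K p]
    (g : MvPolynomial (Fin n) K) : expand p (map (frobenius K p) g) = g ^ p := by
  induction g using MvPolynomial.induction_on with
  | C a => simp [expand_C, frobenius_def]
  | add P Q hP hQ => simp only [map_add, hP, hQ, add_pow_char]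
  | mul_X P k hP => rw [map_mul, map_mul, hP, map_X, expand_X, mul_pow]

theorem spanning {K : Type*} [CommRing K] {n p : ℕ} (hp : 0 < p) (a : MvPolynomial (Fin n) K) :
    ∃ b : (Fin n → Fin p) → MvPolynomial (Fin n) K,
      a = ∑ α, expand p (b α) * ∏ i, X i ^ (α i : ℕ) := by
  classical
  induction a using MvPolynomial.induction_on' with
  | monomial u a =>
    refine ⟨Pi.single (fun i => ⟨u i % p, Nat.mod_lt _ hp⟩)
      (monomial (Finsupp.equivFunOnFinite.symm fun i => u i / p) a), ?_⟩
    rw [Finset.sum_eq_single (fun i => ⟨u i % p, Nat.mod_lt _ hp⟩)]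
    · rw [Pi.single_eq_same, expand_monomial, monomial_eq, monomial_eq, mul_assoc]
      congr 1
      rw [Finsupp.prod_fintype _ _ (by simp), Finsupp.prod_fintype _ _ (by simp),
        ← Finset.prod_mul_distrib]
      refine Finset.prod_congr rfl fun i _ => ?_
      rw [← pow_add]
      congr 1
      simp [Nat.div_add_mod]
    · intro b _ hb
      rw [Pi.single_eq_of_ne hb]; simp
    · simp
  | add P Q hP hQ =>
    obtain ⟨b, hb⟩ := hP
    obtain ⟨c, hc⟩ := hQ
    refine ⟨b + c, ?_⟩
    rw [hb, hc, ← Finset.sum_add_distrib]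
    exact Finset.sum_congr rfl fun α _ => by simp [add_mul]

theorem contraction {K : Type*} [CommRing K] {n p : ℕ} (hp : p.Prime) [CharP K p]
    (q r : MvPolynomial (Fin n) K) (h : expand p q ∣ expand p r) : q ∣ r := by
  classical
  obtain ⟨a, ha⟩ := h
  obtain ⟨b, hb⟩ := spanning hp.pos a
  let z : Fin n → Fin p := fun _ => ⟨0, hp.pos⟩
  let c : (Fin n → Fin p) → MvPolynomial (Fin n) K := fun α => (if α = z then r else 0) - q * b α
  have hc : ∑ α, expand p (c α) * ∏ i, (X i : MvPolynomial (Fin n) K) ^ (α i : ℕ) = 0 := by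
    simp only [c, map_sub, sub_mul, Finset.sum_sub_distrib, map_mul, mul_assoc]
    rw [← Finset.mul_sum, ← hb, ← ha, Finset.sum_eq_single z]
    · simp [z]
    · intro b _ hb
      simp [hb]
    · simp
  have := genFam (K := K) (expand p : MvPolynomial (Fin n) K →ₐ[K] _).toRingHom X (fun i => pderiv i) 1
    (fun i k => by rw [pderiv_X, Pi.single_apply]; simp [eq_comm]) (fun i a => der_expand_s1 _ _) p
    (unit_nat p hp) 0 (by simp) (by simp) c (by
      rw [zero_dvd_iff]; exact hc) z
  rw [zero_dvd_iff] at this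
  have h2 : c z = 0 := expand_injective hp.pos (by rw [map_zero]; exact this)
  simp only [c, if_true, sub_eq_zero] at h2
  exact ⟨_, h2⟩

end PB

namespace PB

theorem relprime {K : Type*} [CommRing K] [IsDomain K] [UniqueFactorizationMonoid K]
    {p : ℕ} (hp : p.Prime) [CharP K p] {n m : ℕ}
    (f : Fin m → MvPolynomial (Fin n) K)
    (h : ∀ g : MvPolynomial (Fin n) K,
      (∀ j : Fin m → Fin n, g ∣ jacMinor f j) → IsUnit g)
    (q : MvPolynomial (Fin n) K) (hq : Prime q) :
    ∃ j : Fin m → Fin n, IsRelPrime (expand p q) (jacMinor f j) := by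
  have : Fact p.Prime := ⟨hp⟩
  have hq0 : expand p q ≠ 0 := (expand_ne_zero hp.pos).2 hq.ne_zero
  have hqu : ¬ IsUnit (expand p q) := by
    intro hu
    have := isLocalHom_expand (σ := Fin n) (R := K) hp.ne_zero
    exact hq.not_isUnit (isUnit_of_map_unit (expand p) q hu)
  have key : ∀ g, Prime g → g ∣ expand p q → expand p q ∣ g ^ p := by
    rintro g hg ⟨c, hc⟩
    have h1 : map (frobenius K p) g ∣ q ^ p := by
      refine ⟨map (frobenius K p) c, expand_injective hp.pos ?_⟩
      rw [map_pow, map_mul, pow_char, pow_char, hc, mul_pow]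
    obtain ⟨i, -, hi⟩ := (dvd_prime_pow hq p).1 h1
    rw [← pow_char]
    refine map_dvd (expand p) (dvd_trans ?_ hi.symm.dvd)
    apply dvd_pow_self
    rintro rfl
    have h2 : IsUnit (map (frobenius K p) g) := by
      rw [pow_zero] at hi
      exact associated_one_iff_isUnit.1 hi
    have h3 := h2.map (expand p)
    rw [pow_char] at h3
    exact hg.not_isUnit ((isUnit_pow_iff hp.ne_zero).1 h3)
  obtain ⟨g, hg, hgq⟩ := WfDvdMonoid.exists_irreducible_factor hqu hq0
  obtain ⟨j, hj⟩ : ∃ j, ¬ g ∣ jacMinor f j := by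
    by_contra hcon
    push Not at hcon
    exact hg.not_isUnit (h g hcon)
  refine ⟨j, ?_⟩
  intro e he1 he2
  by_contra hu
  obtain ⟨g', hg', hge⟩ := WfDvdMonoid.exists_irreducible_factor hu
    (fun h0 => hq0 (by rw [h0] at he1; exact zero_dvd_iff.1 he1))
  have h4 := key g' hg'.prime (hge.trans he1)
  have h5 : g ∣ g' := hg.prime.dvd_of_dvd_pow (hgq.trans h4)
  exact hj (h5.trans (hge.trans he2))

theorem divide {K : Type*} [CommRing K] [IsDomain K] [UniqueFactorizationMonoid K]
    {p : ℕ} (hp : p.Prime) [CharP K p] {n m : ℕ}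
    (f : Fin m → MvPolynomial (Fin n) K)
    (h : ∀ g : MvPolynomial (Fin n) K,
      (∀ j : Fin m → Fin n, g ∣ jacMinor f j) → IsUnit g)
    (b : MvPolynomial (Fin n) K) : b ≠ 0 → ∀ a : MvPolynomial (Fin n) K,
      (∃ c : (Fin m → Fin p) → MvPolynomial (Fin n) K,
        expand p b * a = ∑ α, expand p (c α) * ∏ i, f i ^ (α i : ℕ)) →
      ∃ c : (Fin m → Fin p) → MvPolynomial (Fin n) K,
        a = ∑ α, expand p (c α) * ∏ i, f i ^ (α i : ℕ) := by
  induction b using UniqueFactorizationMonoid.induction_on_prime with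
  | h₁ => intro h0; exact absurd rfl h0
  | h₂ u hu =>
    rintro - a ⟨c, hc⟩
    obtain ⟨v, hv⟩ := hu.exists_left_inv
    refine ⟨fun α => v * c α, ?_⟩
    simp only [map_mul, mul_assoc]
    rw [← Finset.mul_sum, ← hc, ← mul_assoc, ← map_mul, hv]
    simp
  | h₃ b q hb hq ih =>
    rintro - a ⟨c, hc⟩
    apply ih hb
    obtain ⟨j, hj⟩ := relprime hp f h q hq
    obtain ⟨E, hE⟩ := exists_E_s1 f j
    have hd : ∀ α, q ∣ c α := by
      intro α
      apply contraction hp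
      refine genFam (K := K) (expand p : MvPolynomial (Fin n) K →ₐ[K] _).toRingHom f E (jacMinor f j)
        hE (fun i a => der_expand_s1 _ _) p (unit_nat p hp) (expand p q) (fun i => der_expand_s1 _ _)
        (fun x hx => hj.dvd_of_dvd_mul_left hx) c ?_ α
      refine ⟨expand p b * a, ?_⟩
      rw [← mul_assoc, ← map_mul, hc]
      rfl
    choose c' hc' using hd
    refine ⟨c', ?_⟩
    apply mul_left_cancel₀ ((expand_ne_zero hp.pos).2 hq.ne_zero)
    rw [← mul_assoc, ← map_mul, hc, Finset.mul_sum]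
    refine Finset.sum_congr rfl fun α _ => ?_
    rw [hc', map_mul, mul_assoc]

theorem depend {K : Type*} [CommRing K] [IsDomain K]
    {p : ℕ} (hp : 0 < p) {n : ℕ} {ι : Type*} [Fintype ι] [DecidableEq ι] (e : ι ≃ Fin n)
    (M : (ι → Fin p) → MvPolynomial (Fin n) K)
    (hM : ∀ c : (ι → Fin p) → MvPolynomial (Fin n) K,
      ∑ γ, expand p (c γ) * M γ = 0 → ∀ γ, c γ = 0) (a : MvPolynomial (Fin n) K) :
    ∃ b : MvPolynomial (Fin n) K, b ≠ 0 ∧ ∃ c : (ι → Fin p) → MvPolynomial (Fin n) K,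
      expand p b * a = ∑ γ, expand p (c γ) * M γ := by
  classical
  let R := (expand p : MvPolynomial (Fin n) K →ₐ[K] MvPolynomial (Fin n) K).range
  let v : Option (ι → Fin p) → MvPolynomial (Fin n) K := fun o => o.elim a M
  let w : (Fin n → Fin p) → MvPolynomial (Fin n) K := fun α => ∏ i, X i ^ (α i : ℕ)
  have hdep : ¬ LinearIndependent R v := by
    intro hv
    have h1 := linearIndependent_le_span' v hv (Set.range w) (by
      rintro _ ⟨o, rfl⟩
      obtain ⟨b, hb⟩ := spanning hp (v o)
      rw [hb]
      refine Submodule.sum_mem _ fun α _ => ?_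
      exact Submodule.smul_mem _ (⟨expand p (b α), b α, rfl⟩ : R)
        (Submodule.subset_span ⟨α, rfl⟩))
    have h2 : Fintype.card (Set.range w) ≤ Fintype.card (Fin n → Fin p) :=
      Fintype.card_range_le w
    have h3 : Fintype.card (ι → Fin p) = Fintype.card (Fin n → Fin p) :=
      Fintype.card_congr (Equiv.arrowCongr e (Equiv.refl _))
    rw [Cardinal.mk_fintype] at h1
    have h4 : Fintype.card (Option (ι → Fin p)) ≤ Fintype.card (Set.range w) := by
      exact_mod_cast h1
    rw [Fintype.card_option] at h4
    omega
  rw [Fintype.linearIndependent_iff] at hdep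
  push Not at hdep
  obtain ⟨g, hg, o, ho⟩ := hdep
  have hr : ∀ o, ∃ r, expand p r = (g o : MvPolynomial (Fin n) K) := fun o => (g o).2
  choose r hr using hr
  have hs : expand p (r none) * a + ∑ γ, expand p (r (some γ)) * M γ = 0 := by
    rw [Fintype.sum_option] at hg
    simp only [hr]; exact hg
  refine ⟨r none, ?_, fun γ => - r (some γ), ?_⟩
  · intro h0
    rw [h0, map_zero, zero_mul, zero_add] at hs
    have := hM _ hs
    apply ho
    apply Subtype.ext
    rw [← hr]
    cases o with
    | none => simp [h0]
    | some γ => simp [this γ]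
  · simp only [map_neg, neg_mul, Finset.sum_neg_distrib]
    exact eq_neg_of_add_eq_zero_left hs

theorem der_pow {K A ι : Type*} [CommRing K] [CommRing A] [Algebra K A] [Fintype ι]
    (d : Derivation K A A) (F : ι → A) (c : ι → A) (hc : ∀ i, d (F i) = c i * F i) (α : ι → ℕ) :
    d (∏ i, F i ^ α i) = (∑ i, (α i : A) * c i) * ∏ i, F i ^ α i := by
  classical
  have : ∀ s : Finset ι, d (∏ i ∈ s, F i ^ α i) = (∑ i ∈ s, (α i : A) * c i) * ∏ i ∈ s, F i ^ α i := by
    intro s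
    induction s using Finset.induction_on with
    | empty => simp
    | insert i s hi ih =>
      rw [Finset.prod_insert hi, Finset.sum_insert hi, Derivation.leibniz, ih, Derivation.leibniz_pow,
        hc]
      simp only [smul_eq_mul, nsmul_eq_mul]
      rcases Nat.eq_zero_or_pos (α i) with h0 | h0
      · simp [h0]
      · obtain ⟨k, hk⟩ : ∃ k, α i = k + 1 := ⟨α i - 1, by omega⟩
        rw [hk, Nat.add_sub_cancel]
        ring
  exact this _

theorem lam_ne {K : Type*} [CommRing K] [IsDomain K] {p : ℕ} [CharP K p] {n : ℕ} (i0 : Fin n)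
    {κ : Type*} [Fintype κ] (t : κ → ℕ) (ht : Function.Injective t) (β : κ → Fin p)
    (h : ∑ k, ((β k : ℕ) : MvPolynomial (Fin n) K) * X i0 ^ t k = 0) (k : κ) : (β k : ℕ) = 0 := by
  classical
  have := congr_arg (coeff (Finsupp.single i0 (t k))) h
  rw [coeff_sum, Finset.sum_eq_single k] at this
  · rw [← map_natCast (C : K →+* MvPolynomial (Fin n) K), coeff_C_mul, coeff_X_pow] at this
    simp only [if_true, mul_one, coeff_zero] at this
    rw [CharP.cast_eq_zero_iff K p] at this
    exact Nat.eq_zero_of_dvd_of_lt this (β k).2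
  · intro l _ hl
    rw [← map_natCast (C : K →+* MvPolynomial (Fin n) K), coeff_C_mul, coeff_X_pow, if_neg]
    · simp
    · intro hh
      exact hl (ht (Finsupp.single_injective i0 hh))
  · simp

end PB
/-- If every common divisor of all `m×m` jacobian minors of `f₁,…,f_m` is invertible
(`dgcd(f₁,…,f_m) ∼ 1`), then `f₁,…,f_m` form a `p`-basis over `B = K[x₁^p,…,x_n^p]`
of the ring of constants of some `K`-derivation of `K[x₁,…,x_n]`. -/
theorem pBasis_of_dgcd_isUnit
    {K : Type*} [CommRing K] [IsDomain K] [UniqueFactorizationMonoid K]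
    (p : ℕ) (hp : 0 < p) [CharP K p] {n m : ℕ} (hm : 1 ≤ m) (hmn : m ≤ n)
    (f : Fin m → MvPolynomial (Fin n) K)
    (h : ∀ g : MvPolynomial (Fin n) K,
      (∀ j : Fin m → Fin n, g ∣ jacMinor f j) → IsUnit g) :
    ∃ d : Derivation K (MvPolynomial (Fin n) K) (MvPolynomial (Fin n) K),
      IsPBasis (pPowers K n p) {a | d a = 0} p f := by
  classical
  have hpp : p.Prime := (CharP.char_is_prime_or_zero K p).resolve_right hp.ne'
  obtain ⟨j, hj⟩ : ∃ j, jacMinor f j ≠ 0 := by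
    by_contra hcon
    push Not at hcon
    exact not_isUnit_zero (h 0 fun j => by rw [hcon j])
  have hinj : Function.Injective j := by
    intro a b hab
    by_contra hne
    exact hj (Matrix.det_zero_of_column_eq hne fun i => by simp [hab])
  let i0 : Fin n := ⟨0, by omega⟩
  let κ := {k : Fin n // k ∉ Set.range j}
  let e0 : Fin m ⊕ κ → Fin n := Sum.elim j Subtype.val
  have he0 : Function.Bijective e0 := by
    constructor
    · rintro (a | a) (b | b) hab
      · exact congr_arg _ (hinj hab)
      · exact absurd ⟨a, hab⟩ b.2
      · exact absurd ⟨b, hab.symm⟩ a.2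
      · exact congr_arg _ (Subtype.ext hab)
    · intro k
      by_cases hk : k ∈ Set.range j
      · obtain ⟨a, ha⟩ := hk
        exact ⟨Sum.inl a, ha⟩
      · exact ⟨Sum.inr ⟨k, hk⟩, rfl⟩
  let F : Fin m ⊕ κ → MvPolynomial (Fin n) K := Sum.elim f fun k => X k.1
  obtain ⟨E, hE⟩ := PB.exists_E_s1 F e0
  have hdet : (Matrix.of fun i l => pderiv (e0 l) (F i) :
      Matrix (Fin m ⊕ κ) (Fin m ⊕ κ) (MvPolynomial (Fin n) K)).det = jacMinor f j := by
    have : (Matrix.of fun i l => pderiv (e0 l) (F i) :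
      Matrix (Fin m ⊕ κ) (Fin m ⊕ κ) (MvPolynomial (Fin n) K)) =
      Matrix.fromBlocks (Matrix.of fun i l => pderiv (j l) (f i))
        (Matrix.of fun i (l : κ) => pderiv l.1 (f i)) 0 1 := by
      ext1 a b
      rcases a with a | a <;> rcases b with b | b
      · rfl
      · rfl
      · simp only [Matrix.of_apply, e0, F, Sum.elim_inl, Sum.elim_inr, Matrix.fromBlocks_apply₂₁]
        exact pderiv_X_of_ne fun hh => a.2 ⟨b, hh.symm⟩
      · simp only [Matrix.of_apply, e0, F, Sum.elim_inr, Matrix.fromBlocks_apply₂₂]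
        rw [pderiv_X, Matrix.one_apply, Pi.single_apply]
        exact if_congr Subtype.ext_iff.symm rfl rfl
    rw [this, Matrix.det_fromBlocks_zero₂₁, Matrix.det_one, mul_one]
    rfl
  rw [hdet] at hE
  set D := jacMinor f j with hDdef
  let lam : κ → MvPolynomial (Fin n) K := fun k => X i0 ^ (k.1 : ℕ)
  let d : Derivation K (MvPolynomial (Fin n) K) (MvPolynomial (Fin n) K) :=
    ∑ k : κ, (expand p (lam k) * X k.1) • E (Sum.inr k)
  have hd : ∀ a, d a = ∑ k : κ, expand p (lam k) * X k.1 * E (Sum.inr k) a := by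
    intro a
    simp only [d]
    rw [← Derivation.coeFnAddMonoidHom_apply, map_sum, Finset.sum_apply]
    rfl
  let c0 : Fin m ⊕ κ → MvPolynomial (Fin n) K := Sum.elim 0 fun k => D * expand p (lam k)
  have hdF : ∀ i, d (F i) = c0 i * F i := by
    intro i
    rw [hd]
    simp only [hE]
    rcases i with i | i
    · simp [c0]
    · rw [Finset.sum_eq_single i]
      · simp [c0, F]
        ring
      · intro b _ hb
        simp [hb]
      · simp
  have hind : ∀ c : (Fin m ⊕ κ → Fin p) → MvPolynomial (Fin n) K,
      ∑ γ, expand p (c γ) * ∏ i, F i ^ (γ i : ℕ) = 0 → ∀ γ, c γ = 0 := by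
    intro c hc γ
    have := PB.genFam (K := K) (expand p : MvPolynomial (Fin n) K →ₐ[K] _).toRingHom F E D
      hE (fun i a => PB.der_expand_s1 _ _) p (PB.unit_nat p hpp) 0 (by simp)
      (fun c hc => by
        rw [zero_dvd_iff] at hc ⊢
        exact (mul_eq_zero.1 hc).resolve_left hj) c (by rw [zero_dvd_iff]; exact hc) γ
    rw [zero_dvd_iff] at this
    exact expand_injective hpp.pos (by rw [map_zero]; exact this)
  refine ⟨d, ?_, ?_, ?_, ?_⟩
  · intro x hx
    obtain ⟨r, rfl⟩ := (PB.mem_pPowers x).1 hx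
    exact PB.der_expand_s1 d r
  · intro α
    have := PB.der_pow d f 0 (fun i => by simpa [F, c0] using hdF (Sum.inl i)) (fun i => (α i : ℕ))
    simpa [pMonomial] using this
  · intro b hb hsum
    have hb' : ∀ α, ∃ r, expand p r = b α := fun α => (PB.mem_pPowers _).1 (hb α)
    choose r hr using hb'
    obtain ⟨E', hE'⟩ := PB.exists_E_s1 f j
    intro α
    have := PB.genFam (K := K) (expand p : MvPolynomial (Fin n) K →ₐ[K] _).toRingHom f E' D
      hE' (fun i a => PB.der_expand_s1 _ _) p (PB.unit_nat p hpp) 0 (by simp)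
      (fun c hc => by
        rw [zero_dvd_iff] at hc ⊢
        exact (mul_eq_zero.1 hc).resolve_left hj) r (by
          rw [zero_dvd_iff, ← hsum]
          exact Finset.sum_congr rfl fun α _ => by rw [← hr]; rfl) α
    rw [zero_dvd_iff] at this
    rw [← hr]
    exact this
  · intro a ha
    obtain ⟨b, hb0, c, hc⟩ := PB.depend hp (Equiv.ofBijective e0 he0)
      (fun γ => ∏ i, F i ^ (γ i : ℕ)) hind a
    have hz : ∀ γ, c γ * ∑ k : κ, ((γ (Sum.inr k) : ℕ) : MvPolynomial (Fin n) K) * lam k = 0 := by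
      apply hind
      have h1 : d (expand p b * a) = 0 := by
        rw [Derivation.leibniz, PB.der_expand_s1, show d a = 0 from ha]; simp
      rw [hc, map_sum] at h1
      have h2 : D * ∑ γ, expand p (c γ *
          ∑ k : κ, ((γ (Sum.inr k) : ℕ) : MvPolynomial (Fin n) K) * lam k) *
            ∏ i, F i ^ (γ i : ℕ) = 0 := by
        rw [← h1, Finset.mul_sum]
        refine Finset.sum_congr rfl fun γ _ => ?_
        rw [Derivation.leibniz, PB.der_expand_s1, PB.der_pow d F c0 hdF (fun i => (γ i : ℕ)),
          Fintype.sum_sum_type]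
        simp only [c0, Sum.elim_inl, Sum.elim_inr, Pi.zero_apply, mul_zero, Finset.sum_const_zero,
          zero_add, smul_zero, add_zero, smul_eq_mul, map_mul, map_sum, map_natCast]
        have h3 : ∀ k : κ, ((γ (Sum.inr k) : ℕ) : MvPolynomial (Fin n) K) *
            (D * expand p (lam k)) =
            D * (((γ (Sum.inr k) : ℕ) : MvPolynomial (Fin n) K) * expand p (lam k)) :=
          fun k => by ring
        simp only [h3, ← Finset.mul_sum]
        ring
      exact (mul_eq_zero.1 h2).resolve_left hj
    have hz2 : ∀ γ, (∃ k, (γ (Sum.inr k) : ℕ) ≠ 0) → c γ = 0 := by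
      rintro γ ⟨k, hk⟩
      refine (mul_eq_zero.1 (hz γ)).resolve_right fun h0 => hk ?_
      exact PB.lam_ne i0 (fun k : κ => (k.1 : ℕ))
        (fun a b hab => Subtype.ext (Fin.ext hab)) (fun k => γ (Sum.inr k)) h0 k
    let z : κ → Fin p := fun _ => ⟨0, hp⟩
    obtain ⟨c', hc'⟩ := PB.divide hpp f h b hb0 a ⟨fun α => c (Sum.elim α z), by
      rw [hc, ← (Equiv.sumArrowEquivProdArrow (Fin m) κ (Fin p)).symm.sum_comp,
        Fintype.sum_prod_type]
      refine Finset.sum_congr rfl fun α _ => ?_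
      rw [Finset.sum_eq_single z]
      · congr 1
        rw [Fintype.prod_sum_type]
        simp [F, z, Equiv.sumArrowEquivProdArrow]
      · intro β _ hβ
        rw [hz2, map_zero, zero_mul]
        by_contra hcon
        push Not at hcon
        exact hβ (funext fun k => Fin.ext (hcon k))
      · simp⟩
    exact ⟨fun α => expand p (c' α), fun α => (PB.mem_pPowers _).2 ⟨_, rfl⟩, hc'⟩
end

section
/- Let K be a UFD of characteristic p > 0, let A = K[x_1,…,x_n] be the polynomial algebra, B = K[x_1^p,…,x_n^p], and let f_1,…,f_m ∈ A with 1 ≤ m ≤ n. Set R_i = B[f_1,…,f_{i-1},f_{i+1},…,f_m] and, for i ≠ j, R_{ij} = B[f_1,…,f_m with f_i and f_j omitted]. Suppose that: for every i and all b,c ∈ R_i with b ≠ 0 and gcd(b,c) a unit, the polynomial b·f_i + c is square-free and B-free; and, if m > 1, for all i ≠ j and all b_1,b_2,c_1,c_2 ∈ R_{ij} with b_1,b_2 ≠ 0, gcd(b_1,c_1) a unit and gcd(b_2,c_2) a unit, the polynomials b_1·f_i + c_1 and b_2·f_j + c_2 have unit gcd. Then every common divisor of all m×m jacobian minors jac^{f_1,…,f_m}_{j_1,…,j_m}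 is invertible (i.e., dgcd(f_1,…,f_m) is a unit). -/
open MvPolynomial

open scoped Polynomial in
theorem exists_der {L : Type*} [Field L] (p : ℕ) (hp : p.Prime) [CharP L p] (F : Subfield L)
    (hF : ∀ z : L, z ^ p ∈ F) (y : L) (hy : y ∉ F) :
    ∃ δ : L → L, (∀ a b, δ (a + b) = δ a + δ b) ∧ (∀ a b, δ (a * b) = a * δ b + b * δ a) ∧
      (∀ a ∈ F, δ a = 0) ∧ δ y = 1 := by
  have : Fact p.Prime := ⟨hp⟩
  obtain ⟨M, hFM, hM⟩ := zorn_le_nonempty₀ {M : Subfield L | y ∉ M} (by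
    intro c hc hch z hz
    refine ⟨sSup c, ?_, fun w hw => le_sSup hw⟩
    simp only [Set.mem_ofPred_eq]
    rw [Subfield.mem_sSup_of_directedOn ⟨z, hz⟩ hch.directedOn]
    rintro ⟨s, hs, hys⟩
    exact hc hs hys) F hy
  have hyM : y ∉ M := hM.prop
  have hpM : ∀ z : L, z ^ p ∈ M := fun z => hFM (hF z)
  have hmin : ∀ z : L, z ∉ M → minpoly M z = Polynomial.X ^ p - Polynomial.C (⟨z ^ p, hpM z⟩ : M) := by
    intro z hz
    refine (minpoly.eq_of_irreducible_of_monic ?_ ?_ ?_).symm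
    · refine X_pow_sub_C_irreducible_of_prime hp ?_
      intro b hb
      have h1 : (b : L) ^ p = z ^ p := congrArg Subtype.val hb
      have := frobenius_inj L p h1
      exact hz (this ▸ b.2)
    · simp [Algebra.algebraMap_eq_smul_one, Subfield.smul_def]
    · exact Polynomial.monic_X_pow_sub_C _ hp.ne_zero
  have hint : ∀ z : L, IsIntegral M z := fun z =>
    ⟨Polynomial.X ^ p - Polynomial.C (⟨z ^ p, hpM z⟩ : M), Polynomial.monic_X_pow_sub_C _ hp.ne_zero, by
      rw [← Polynomial.aeval_def]; simp [Algebra.algebraMap_eq_smul_one, Subfield.smul_def]⟩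
  have hfr : ∀ z : L, z ∉ M → Module.finrank M (IntermediateField.adjoin M {z}) = p := by
    intro z hz
    rw [IntermediateField.adjoin.finrank (hint z), hmin z hz, Polynomial.natDegree_X_pow_sub_C]
  have hrep : ∀ z : L, ∃ q : M[X], Polynomial.aeval y q = z := by
    intro z
    by_cases hz : z ∈ M
    · exact ⟨Polynomial.C ⟨z, hz⟩, by simp [Algebra.algebraMap_eq_smul_one, Subfield.smul_def]⟩
    have hyz : y ∈ IntermediateField.adjoin M {z} := by
      by_contra hcon
      have hle : M ≤ (IntermediateField.adjoin M {z}).toSubfield := by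
        intro a ha
        exact (IntermediateField.adjoin M {z}).algebraMap_mem ⟨a, ha⟩
      have := hM.le_of_ge (y := (IntermediateField.adjoin M {z}).toSubfield) hcon hle
      exact hz (this (IntermediateField.mem_adjoin_simple_self M z))
    have : FiniteDimensional M (IntermediateField.adjoin M {z}) :=
      IntermediateField.adjoin.finiteDimensional (hint z)
    have heq : IntermediateField.adjoin M {y} = IntermediateField.adjoin M {z} :=
      IntermediateField.eq_of_le_of_finrank_eq
        (IntermediateField.adjoin_simple_le_iff.2 hyz) (by rw [hfr y hyM, hfr z hz])
    have hzy : z ∈ (IntermediateField.adjoin M {y}).toSubalgebra := by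
      rw [heq]; exact IntermediateField.mem_adjoin_simple_self M z
    rw [IntermediateField.adjoin_simple_toSubalgebra_of_isAlgebraic (hint y).isAlgebraic,
      Algebra.adjoin_singleton_eq_range_aeval] at hzy
    exact hzy
  have hwd : ∀ q r : M[X], Polynomial.aeval y q = Polynomial.aeval y r → Polynomial.aeval y (Polynomial.derivative q) = Polynomial.aeval y (Polynomial.derivative r) := by
    intro q r hqr
    have h0 : Polynomial.aeval y (q - r) = 0 := by simp [hqr]
    obtain ⟨s, hs⟩ := minpoly.dvd M y h0
    rw [hmin y hyM] at hs
    have : Polynomial.derivative (q - r) = (Polynomial.X ^ p - Polynomial.C (⟨y ^ p, hpM y⟩ : M)) * Polynomial.derivative s := by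
      rw [hs, Polynomial.derivative_mul]
      simp [Polynomial.derivative_X_pow]
    have h2 : Polynomial.aeval y (Polynomial.derivative (q - r)) = 0 := by
      rw [this]; simp [Algebra.algebraMap_eq_smul_one, Subfield.smul_def]
    rw [Polynomial.derivative_sub, map_sub, sub_eq_zero] at h2
    exact h2
  choose q hq using hrep
  refine ⟨fun z => Polynomial.aeval y (Polynomial.derivative (q z)), ?_, ?_, ?_, ?_⟩
  · intro a b
    have := hwd (q (a + b)) (q a + q b) (by simp [hq])
    simpa using this
  · intro a b
    have := hwd (q (a * b)) (q a * q b) (by simp [hq])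
    simp only [Polynomial.derivative_mul, map_add, map_mul, hq] at this
    simp only [this]; ring
  · intro a ha
    have := hwd (q a) (Polynomial.C ⟨a, hFM ha⟩) (by simp [hq, Algebra.algebraMap_eq_smul_one, Subfield.smul_def])
    simpa using this
  · have := hwd (q y) Polynomial.X (by simp [hq])
    simpa using this


theorem der_sum_apply {K A L ι : Type*} [CommRing K] [CommRing A] [Algebra K A] [AddCommGroup L]
    [Module A L] [Module K L] (s : Finset ι) (E : ι → Derivation K A L) (a : A) :
    (∑ k ∈ s, E k) a = ∑ k ∈ s, E k a := by
  classical
  induction s using Finset.induction_on with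
  | empty => simp
  | insert i s hi ih => rw [Finset.sum_insert hi, Finset.sum_insert hi, Derivation.add_apply, ih]

theorem null_vec {K L : Type*} [CommRing K] [Field L] {n m : ℕ} [Algebra K L]
    [Algebra (MvPolynomial (Fin n) K) L] [IsScalarTower K (MvPolynomial (Fin n) K) L]
    (f : Fin m → MvPolynomial (Fin n) K)
    (hz : ∀ j : Fin m → Fin n, algebraMap (MvPolynomial (Fin n) K) L
      (Matrix.of fun i l => pderiv (j l) (f i)).det = 0)
    (D : Fin m → Derivation K (MvPolynomial (Fin n) K) L) :
    ∃ w : Fin m → L, w ≠ 0 ∧ ∀ a, ∑ b, D b (f a) * w b = 0 := by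
  have hD : ∀ (E : Derivation K (MvPolynomial (Fin n) K) L) (a : MvPolynomial (Fin n) K),
      E a = ∑ k, E (X k) * algebraMap _ L (pderiv k a) := by
    intro E a
    have : E = ∑ k, E (X k) • (Algebra.linearMap (MvPolynomial (Fin n) K) L).compDer (pderiv k) := by
      apply derivation_ext
      intro i
      rw [der_sum_apply]
      classical
      simp [pderiv_X, Pi.single_apply, apply_ite]
    conv_lhs => rw [this]
    rw [der_sum_apply]
    simp
  have hdet : (Matrix.of fun a b => D b (f a)).det = 0 := by
    have h1 : (Matrix.of fun a b => D b (f a)).transpose =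
        Matrix.of fun b => ∑ k, D b (X k) • fun a => algebraMap _ L (pderiv k (f a)) := by
      ext b a
      simp [hD (D b) (f a)]
    rw [← Matrix.det_transpose, h1]
    change Matrix.detRowAlternating.toMultilinearMap
      (fun b => ∑ k, D b (X k) • fun a => algebraMap _ L (pderiv k (f a))) = 0
    rw [MultilinearMap.map_sum]
    refine Finset.sum_eq_zero fun r _ => ?_
    rw [MultilinearMap.map_smul_univ]
    have := hz r
    rw [RingHom.map_det, ← Matrix.det_transpose] at this
    have h3 : Matrix.detRowAlternating.toMultilinearMap
      (fun b => fun a => algebraMap (MvPolynomial (Fin n) K) L (pderiv (r b) (f a))) = 0 := this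
    rw [h3, smul_zero]
  obtain ⟨w, hw, h⟩ := Matrix.exists_mulVec_eq_zero_iff.2 hdet
  exact ⟨w, hw, fun a => congrFun h a⟩

theorem coprime_adjust {A : Type*} [CommRing A] [IsDomain A] [UniqueFactorizationMonoid A]
    (p : ℕ) (hp : p ≠ 0) (g b c : A) (hg : Prime g) (hb : b ≠ 0) (hgb : ¬ g ∣ b) :
    ∃ r : A, IsRelPrime b (c + g ^ p * r ^ p) := by
  classical
  refine ⟨((UniqueFactorizationMonoid.factors b).filter (fun q => ¬ q ∣ c)).prod, ?_⟩
  rw [UniqueFactorizationMonoid.isRelPrime_iff_no_prime_factors hb]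
  intro q hqb hqc hq
  by_cases h : q ∣ c
  · rw [dvd_add_right h] at hqc
    rcases hq.dvd_or_dvd hqc with h1 | h1
    · have := (hq.associated_of_dvd hg (hq.dvd_of_dvd_pow h1))
      exact hgb (this.symm.dvd.trans hqb)
    · obtain ⟨a, ha, hqa⟩ := hq.exists_mem_multiset_dvd (hq.dvd_of_dvd_pow h1)
      rw [Multiset.mem_filter] at ha
      have := hq.associated_of_dvd (UniqueFactorizationMonoid.prime_of_factor _ ha.1) hqa
      exact ha.2 (this.symm.dvd.trans h)
  · obtain ⟨a, ha, hqa⟩ := UniqueFactorizationMonoid.exists_mem_factors_of_dvd hb hq.irreducible hqb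
    apply h
    refine (dvd_add_left ?_).1 hqc
    refine Dvd.dvd.mul_left (dvd_pow (hqa.dvd.trans (Multiset.dvd_prod ?_)) hp) _
    rw [Multiset.mem_filter]
    exact ⟨ha, fun hc => h (hqa.dvd.trans hc)⟩

theorem pPowers_pow_mem {K : Type*} [CommRing K] {n p : ℕ} (hp : p.Prime) [CharP K p]
    (a : MvPolynomial (Fin n) K) : a ^ p ∈ pPowers K n p := by
  have : Fact p.Prime := ⟨hp⟩
  change a ^ p ∈ Algebra.adjoin K (Set.range fun i : Fin n => (X i : MvPolynomial (Fin n) K) ^ p)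
  induction a using MvPolynomial.induction_on with
  | C r =>
    rw [← C_pow]
    exact Subalgebra.algebraMap_mem _ (r ^ p)
  | add a b ha hb =>
    rw [add_pow_char]
    exact add_mem ha hb
  | mul_X a i ha =>
    rw [mul_pow]
    exact mul_mem ha (Algebra.subset_adjoin ⟨i, rfl⟩)

theorem der_eq_zero {K L : Type*} [CommRing K] [Field L] {n p : ℕ} [CharP L p] [Algebra K L]
    [Algebra (MvPolynomial (Fin n) K) L] [IsScalarTower K (MvPolynomial (Fin n) K) L]
    (T : Set (MvPolynomial (Fin n) K))
    (D : Derivation K (MvPolynomial (Fin n) K) L) (hT : ∀ a ∈ T, D a = 0)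
    (c : MvPolynomial (Fin n) K)
    (hc : c ∈ Subring.closure (↑(pPowers K n p) ∪ T)) : D c = 0 := by
  have hB : ∀ c ∈ pPowers K n p, D c = 0 := by
    intro c hc
    change c ∈ Algebra.adjoin K
      (Set.range fun i : Fin n => (X i : MvPolynomial (Fin n) K) ^ p) at hc
    induction hc using Algebra.adjoin_induction with
    | mem x hx =>
      obtain ⟨i, rfl⟩ := hx
      simp only
      rw [Derivation.leibniz_pow]
      rw [← Nat.cast_smul_eq_nsmul L, CharP.cast_eq_zero, zero_smul]
    | algebraMap r => exact D.map_algebraMap r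
    | add x y _ _ hx hy => rw [map_add, hx, hy, add_zero]
    | mul x y _ _ hx hy => rw [D.leibniz, hx, hy, smul_zero, smul_zero, add_zero]
  induction hc using Subring.closure_induction with
  | mem x hx =>
    rcases hx with hx | hx
    · exact hB x hx
    · exact hT x hx
  | zero => simp
  | one => simp
  | add x y _ _ hx hy => rw [map_add, hx, hy, add_zero]
  | neg x _ hx => rw [map_neg, hx, neg_zero]
  | mul x y _ _ hx hy => rw [D.leibniz, hx, hy, smul_zero, smul_zero, add_zero]

theorem mem_pPowers_of_dvd {K : Type*} [CommRing K] [IsDomain K] {n p : ℕ} [CharP K p]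
    (g : MvPolynomial (Fin n) K) (hg : ∀ k, g ∣ pderiv k g) : g ∈ pPowers K n p := by
  have h0 : ∀ k, pderiv k g = 0 := by
    intro k
    by_contra hne
    obtain ⟨h, hh⟩ := hg k
    have hg0 : g ≠ 0 := by rintro rfl; simp at hne
    have hh0 : h ≠ 0 := by rintro rfl; simp at hh; exact hne hh
    have h1 : g.totalDegree ≤ (pderiv k g).totalDegree := by
      rw [hh, totalDegree_mul_of_isDomain hg0 hh0]; omega
    obtain ⟨s, hs, hs'⟩ : ∃ s ∈ (pderiv k g).support,
        (pderiv k g).totalDegree = s.sum fun _ e => e := by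
      have hne' : (pderiv k g).support.Nonempty := support_nonempty.2 hne
      exact Finset.exists_mem_eq_sup _ hne' _
    rw [mem_support_iff, coeff_pderiv] at hs
    have h2 : s + Finsupp.single k 1 ∈ g.support := by
      rw [mem_support_iff]; exact left_ne_zero_of_mul hs
    have h3 := le_totalDegree h2
    rw [Finsupp.sum_add_index' (by simp) (by simp), Finsupp.sum_single_index rfl] at h3
    omega
  rw [g.as_sum]
  refine sum_mem fun s hs => ?_
  have hdiv : ∀ k, p ∣ s k := by
    intro k
    by_cases hk : s k = 0
    · simp [hk]
    have hle : Finsupp.single k 1 ≤ s := by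
      rw [Finsupp.single_le_iff]; omega
    have h1 := coeff_pderiv (i := k) g (s - Finsupp.single k 1)
    rw [h0 k, coeff_zero, tsub_add_cancel_of_le hle] at h1
    have h2 : (((s k : ℕ)) : K) = 0 := by
      rcases mul_eq_zero.1 h1.symm with h | h
      · exact absurd h (mem_support_iff.1 hs)
      · rw [← h]
        simp only [Finsupp.coe_tsub, Pi.sub_apply, Finsupp.single_eq_same]
        norm_cast
        congr 1
        omega
    exact (CharP.cast_eq_zero_iff K p _).1 h2
  change monomial s (coeff s g) ∈ Algebra.adjoin K
      (Set.range fun i : Fin n => (X i : MvPolynomial (Fin n) K) ^ p)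
  rw [monomial_eq, Finsupp.prod]
  refine mul_mem (Subalgebra.algebraMap_mem _ _) (prod_mem fun k _ => ?_)
  obtain ⟨e, he⟩ := hdiv k
  rw [he, pow_mul]
  exact pow_mem (Algebra.subset_adjoin (Set.mem_range_self k)) _

theorem core {K L : Type*} [CommRing K] [IsDomain K] [UniqueFactorizationMonoid K]
    (p : ℕ) (hp : p.Prime) [CharP K p] {n m : ℕ} [Field L] [CharP L p] [Algebra K L]
    [Algebra (MvPolynomial (Fin n) K) L] [IsScalarTower K (MvPolynomial (Fin n) K) L]
    (f : Fin m → MvPolynomial (Fin n) K)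
    (h1 : ∀ i : Fin m, ∀ b c : MvPolynomial (Fin n) K,
      b ∈ Ri K p f i → c ∈ Ri K p f i → b ≠ 0 → IsRelPrime b c →
      Squarefree (b * f i + c) ∧ BFree (pPowers K n p) (b * f i + c))
    (h2 : 1 < m → ∀ i j : Fin m, i ≠ j →
      ∀ b₁ b₂ c₁ c₂ : MvPolynomial (Fin n) K,
      b₁ ∈ Rij K p f i j → b₂ ∈ Rij K p f i j →
      c₁ ∈ Rij K p f i j → c₂ ∈ Rij K p f i j →
      b₁ ≠ 0 → b₂ ≠ 0 → IsRelPrime b₁ c₁ → IsRelPrime b₂ c₂ →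
      IsRelPrime (b₁ * f i + c₁) (b₂ * f j + c₂))
    (g : MvPolynomial (Fin n) K) (hg : Prime g)
    (hdvd : ∀ j : Fin m → Fin n, g ∣ jacMinor f j)
    (hker : ∀ a : MvPolynomial (Fin n) K, algebraMap _ L a = 0 ↔ g ∣ a)
    (hsurj : ∀ u : L, ∃ a b : MvPolynomial (Fin n) K, algebraMap _ L a / algebraMap _ L b = u) :
    False := by
  classical
  have hz : ∀ j : Fin m → Fin n, algebraMap (MvPolynomial (Fin n) K) L
      (Matrix.of fun i l => pderiv (j l) (f i)).det = 0 := fun j => (hker _).2 (hdvd j)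
  -- the subrings and subfields
  let R : Finset (Fin m) → Subring (MvPolynomial (Fin n) K) := fun T =>
    Subring.closure (↑(pPowers K n p) ∪ (f '' (T : Set (Fin m))))
  let F : Finset (Fin m) → Subfield L := fun T =>
    Subfield.closure (((R T).map (algebraMap (MvPolynomial (Fin n) K) L) : Subring L) : Set L)
  have hBR : ∀ T, ∀ b ∈ pPowers K n p, b ∈ R T := fun T b hb =>
    Subring.subset_closure (Or.inl hb)
  have hfR : ∀ T, ∀ i ∈ T, f i ∈ R T := fun T i hi =>
    Subring.subset_closure (Or.inr ⟨i, hi, rfl⟩)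
  have hRF : ∀ T, ∀ b ∈ R T, algebraMap _ L b ∈ F T := fun T b hb =>
    Subfield.subset_closure ⟨b, hb, rfl⟩
  have hpF : ∀ T, ∀ z : L, z ^ p ∈ F T := by
    intro T z
    obtain ⟨a, b, rfl⟩ := hsurj z
    rw [div_pow, ← map_pow, ← map_pow]
    exact div_mem (hRF T _ (hBR T _ (pPowers_pow_mem hp a)))
      (hRF T _ (hBR T _ (pPowers_pow_mem hp b)))
  -- clearing denominators and making the coefficients coprime
  have hclear : ∀ T i, algebraMap _ L (f i) ∈ F T → ∃ b c, b ∈ pPowers K n p ∧ c ∈ R T ∧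
      b ≠ 0 ∧ ¬ g ∣ b ∧ IsRelPrime b c ∧ g ∣ b * f i + c := by
    intro T i hi
    have : ∃ b c, b ∈ R T ∧ c ∈ R T ∧ ¬ g ∣ b ∧ g ∣ b * f i + c := by
      obtain ⟨y, hy, z, hz, hyz⟩ := Subfield.mem_closure_iff.1 hi
      rw [Subring.closure_eq] at hy hz
      obtain ⟨c, hc, rfl⟩ := hy
      obtain ⟨b, hb, rfl⟩ := hz
      by_cases hb0 : algebraMap (MvPolynomial (Fin n) K) L b = 0
      · refine ⟨1, 0, one_mem _, zero_mem _, fun h => hg.not_isUnit (isUnit_of_dvd_one h), ?_⟩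
        rw [← hker, one_mul, add_zero, ← hyz, hb0, div_zero]
      · refine ⟨b, -c, hb, neg_mem hc, fun h => hb0 ((hker _).2 h), ?_⟩
        rw [← hker, map_add, map_mul, ← hyz, map_neg, mul_div_cancel₀ _ hb0, add_neg_cancel]
    obtain ⟨b, c, hb, hc, hgb, hgbc⟩ := this
    have hgbp : ¬ g ∣ b ^ p := fun h => hgb (hg.dvd_of_dvd_pow h)
    have hb0 : b ^ p ≠ 0 := fun h => hgbp (h ▸ dvd_zero g)
    obtain ⟨r, hr⟩ := coprime_adjust p hp.ne_zero g (b ^ p) (b ^ (p - 1) * c) hg hb0 hgbp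
    refine ⟨b ^ p, _, pPowers_pow_mem hp b, ?_, hb0, hgbp, hr, ?_⟩
    · exact add_mem (mul_mem (pow_mem hb _) hc) (mul_mem (hBR T _ (pPowers_pow_mem hp g))
        (hBR T _ (pPowers_pow_mem hp r)))
    · have h3 : b ^ p = b ^ (p - 1) * b := by
        rw [← pow_succ, Nat.sub_add_cancel hp.one_le]
      have h4 : b ^ p * f i + (b ^ (p - 1) * c + g ^ p * r ^ p) =
          b ^ (p - 1) * (b * f i + c) + g ^ p * r ^ p := by rw [h3]; ring
      rw [h4]
      exact dvd_add (Dvd.dvd.mul_left hgbc _) (Dvd.dvd.mul_right (dvd_pow_self _ hp.ne_zero) _)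
  -- a minimal generating set
  have hex : ∃ k, ∃ S : Finset (Fin m), S.card = k ∧ ∀ i, algebraMap _ L (f i) ∈ F S :=
    ⟨_, Finset.univ, rfl, fun i => hRF _ _ (hfR _ i (Finset.mem_univ i))⟩
  obtain ⟨S, hSc, hS⟩ := Nat.find_spec hex
  have hSmin : ∀ i ∈ S, algebraMap _ L (f i) ∉ F (S.erase i) := by
    intro i hi hcon
    have hle : F S ≤ F (S.erase i) := by
      refine Subfield.closure_le.2 ?_
      rintro _ ⟨a, ha, rfl⟩
      have hle' : R S ≤ (F (S.erase i)).toSubring.comap (algebraMap _ L) := by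
        refine Subring.closure_le.2 ?_
        rintro x (hx | ⟨j, hj, rfl⟩)
        · exact hRF _ _ (hBR _ _ hx)
        · by_cases hji : j = i
          · subst hji; exact hcon
          · exact hRF _ _ (hfR _ j (Finset.mem_erase.2 ⟨hji, hj⟩))
      exact hle' ha
    have := Nat.find_min hex (m := (S.erase i).card)
      (by rw [← hSc]; exact Finset.card_erase_lt_of_mem hi)
    exact this ⟨_, rfl, fun j => hle (hS j)⟩
  -- dual derivations
  have hder : ∀ i ∈ S, ∃ E : Derivation K (MvPolynomial (Fin n) K) L,
      E g = 0 ∧ ∀ j ∈ S, E (f j) = if j = i then 1 else 0 := by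
    intro i hi
    obtain ⟨δ, hadd, hmul, hF0, hδ⟩ := exists_der p hp (F (S.erase i)) (hpF _) _ (hSmin i hi)
    let l : MvPolynomial (Fin n) K →ₗ[K] L :=
      { toFun := fun a => δ (algebraMap _ L a)
        map_add' := fun a b => by rw [map_add, hadd]
        map_smul' := fun k a => by
          have hk : C k ∈ pPowers K n p := Subalgebra.algebraMap_mem (Algebra.adjoin K _) k
          rw [MvPolynomial.smul_eq_C_mul, map_mul, hmul, hF0 _ (hRF _ _ (hBR _ _ hk)), mul_zero,
            add_zero, RingHom.id_apply, Algebra.smul_def,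
            IsScalarTower.algebraMap_apply K (MvPolynomial (Fin n) K) L]
          rfl }
    refine ⟨Derivation.mk' l fun a b => ?_, ?_, ?_⟩
    · change δ (algebraMap _ L (a * b)) = a • δ (algebraMap _ L b) + b • δ (algebraMap _ L a)
      rw [map_mul, hmul, Algebra.smul_def, Algebra.smul_def]
    · change δ (algebraMap _ L g) = 0
      rw [(hker g).2 dvd_rfl]
      exact hF0 0 (zero_mem _)
    · intro j hj
      change δ (algebraMap _ L (f j)) = _
      split_ifs with h
      · rw [h, hδ]
      · exact hF0 _ (hRF _ _ (hfR _ j (Finset.mem_erase.2 ⟨h, hj⟩)))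
  choose! E hEg hEf using hder
  by_cases hall : ∀ i, i ∈ S
  · obtain ⟨w, hw, hw'⟩ := null_vec f hz E
    apply hw
    funext a
    have := hw' a
    rw [Finset.sum_congr rfl (fun b _ => by rw [hEf b (hall b) a (hall a)])] at this
    simpa using this
  push Not at hall
  obtain ⟨i, hi⟩ := hall
  by_cases hone : ∀ j, j ≠ i → j ∈ S
  · -- exactly one index is missing
    obtain ⟨b, c, hb, hc, hb0, hgb, hrel, hgd⟩ := hclear S i (hS i)
    have hRS : R S ≤ Ri K p f i := by
      refine Subring.closure_mono (Set.union_subset_union_right _ (Set.image_mono ?_))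
      intro j hj hji
      subst hji
      exact hi hj
    obtain ⟨hsq, hBf⟩ := h1 i b c (hRS (hBR _ _ hb)) (hRS hc) hb0 hrel
    by_cases hgB : g ∈ pPowers K n p
    · exact hg.not_isUnit (hBf g hgB hgd)
    obtain ⟨k, hk⟩ : ∃ k, ¬ g ∣ pderiv k g := by
      by_contra hcon
      push Not at hcon
      exact hgB (mem_pPowers_of_dvd g hcon)
    let Dk : Derivation K (MvPolynomial (Fin n) K) L :=
      (Algebra.linearMap (MvPolynomial (Fin n) K) L).compDer (pderiv k)
    let D' : Derivation K (MvPolynomial (Fin n) K) L := Dk - ∑ j ∈ S, Dk (f j) • E j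
    have hD'a : ∀ a, D' a = Dk a - ∑ j ∈ S, Dk (f j) * E j a := by
      intro a
      change (Dk - ∑ j ∈ S, Dk (f j) • E j) a = _
      rw [Derivation.sub_apply, der_sum_apply]
      rfl
    have hD'S : ∀ a ∈ S, D' (f a) = 0 := by
      intro a ha
      rw [hD'a, Finset.sum_congr rfl (fun j hj => by rw [hEf j hj a ha])]
      simp [ha]
    have hD'g : D' g = algebraMap _ L (pderiv k g) := by
      rw [hD'a, Finset.sum_eq_zero (fun j hj => by rw [hEg j hj, mul_zero]), sub_zero]
      rfl
    have hD'i : D' (f i) = 0 := by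
      obtain ⟨w, hw, hw'⟩ := null_vec f hz (fun b => if b = i then D' else E b)
      have hwa : ∀ a, a ≠ i → w a = 0 := by
        intro a ha
        have h5 := hw' a
        rw [Finset.sum_eq_single a] at h5
        · simpa [ha, hEf a (hone a ha) a (hone a ha)] using h5
        · intro b _ hba
          by_cases hbi : b = i
          · simp [hbi, hD'S a (hone a ha)]
          · simp [hbi, hEf b (hone b hbi) a (hone a ha), hba.symm]
        · simp
      have hwi : w i ≠ 0 := by
        intro h
        apply hw
        funext a
        by_cases ha : a = i
        · rw [ha, h]; rfl
        · exact hwa a ha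
      have h5 := hw' i
      rw [Finset.sum_eq_single i] at h5
      · simpa [hwi] using h5
      · intro b _ hbi
        rw [hwa b hbi, mul_zero]
      · simp
    obtain ⟨h, hh⟩ := hgd
    have hDc : D' c = 0 := der_eq_zero (p := p) _ D'
      (by rintro _ ⟨j, hj, rfl⟩; exact hD'S j hj) c hc
    have hDb : D' b = 0 := der_eq_zero (p := p) ∅ D' (by simp) b
      (Subring.subset_closure (Or.inl hb))
    have hgh : g ∣ h := by
      have h6 := congrArg D' hh
      rw [map_add, D'.leibniz, D'.leibniz, hD'i, hDb, hDc, hD'g, smul_zero, smul_zero, add_zero,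
        add_zero, Algebra.smul_def, Algebra.smul_def, (hker g).2 dvd_rfl, zero_mul, zero_add] at h6
      rcases mul_eq_zero.1 h6.symm with h7 | h7
      · exact (hker _).1 h7
      · exact absurd ((hker _).1 h7) hk
    refine hg.not_isUnit (hsq g ?_)
    rw [hh]
    exact mul_dvd_mul_left g hgh
  · push Not at hone
    obtain ⟨j, hji, hj⟩ := hone
    have hm1 : 1 < m := by
      have := i.2
      have := j.2
      by_contra hcon
      exact hji (Fin.ext (by omega))
    have hRS : R S ≤ Rij K p f i j := by
      refine Subring.closure_mono (Set.union_subset_union_right _ (Set.image_mono ?_))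
      intro l hl
      refine ⟨?_, ?_⟩
      · rintro rfl; exact hi hl
      · rintro rfl; exact hj hl
    obtain ⟨b, c, hb, hc, hb0, hgb, hrel, hgd⟩ := hclear S i (hS i)
    obtain ⟨b', c', hb', hc', hb0', hgb', hrel', hgd'⟩ := hclear S j (hS j)
    exact hg.not_isUnit (h2 hm1 i j hji.symm b b' c c' (hRS (hBR _ _ hb)) (hRS (hBR _ _ hb'))
      (hRS hc) (hRS hc') hb0 hb0' hrel hrel' hgd hgd')

/-- If `b·fᵢ + c` is square-free and `B`-free for all suitable `b, c ∈ Rᵢ` and, when `m > 1`,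
`b₁·fᵢ + c₁` and `b₂·fⱼ + c₂` have unit gcd for all suitable data in `R_{ij}`, then every common
divisor of all `m×m` jacobian minors of `f₁,…,f_m` is invertible (`dgcd(f₁,…,f_m) ∼ 1`). -/
theorem dgcd_isUnit_of_factor_conditions
    {K : Type*} [CommRing K] [IsDomain K] [UniqueFactorizationMonoid K]
    (p : ℕ) (hp : 0 < p) [CharP K p] {n m : ℕ} (hm : 1 ≤ m) (hmn : m ≤ n)
    (f : Fin m → MvPolynomial (Fin n) K)
    (h1 : ∀ i : Fin m, ∀ b c : MvPolynomial (Fin n) K,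
      b ∈ Ri K p f i → c ∈ Ri K p f i → b ≠ 0 → IsRelPrime b c →
      Squarefree (b * f i + c) ∧ BFree (pPowers K n p) (b * f i + c))
    (h2 : 1 < m → ∀ i j : Fin m, i ≠ j →
      ∀ b₁ b₂ c₁ c₂ : MvPolynomial (Fin n) K,
      b₁ ∈ Rij K p f i j → b₂ ∈ Rij K p f i j →
      c₁ ∈ Rij K p f i j → c₂ ∈ Rij K p f i j →
      b₁ ≠ 0 → b₂ ≠ 0 → IsRelPrime b₁ c₁ → IsRelPrime b₂ c₂ →
      IsRelPrime (b₁ * f i + c₁) (b₂ * f j + c₂)) :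
    ∀ g : MvPolynomial (Fin n) K,
      (∀ j : Fin m → Fin n, g ∣ jacMinor f j) → IsUnit g := by
  have hpp : p.Prime := (CharP.char_is_prime_or_zero K p).resolve_right hp.ne'
  intro g hgd
  by_contra hgu
  obtain ⟨q, hq, hqd⟩ : ∃ q : MvPolynomial (Fin n) K, Prime q ∧ ∀ j, q ∣ jacMinor f j := by
    by_cases hg0 : g = 0
    · refine ⟨X ⟨0, by omega⟩, X_prime, fun j => ?_⟩
      have h0 := hgd j
      rw [hg0, zero_dvd_iff] at h0
      rw [h0]
      exact dvd_zero _
    · obtain ⟨q, hq, hqg⟩ := WfDvdMonoid.exists_irreducible_factor hgu hg0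
      exact ⟨q, hq.prime, fun j => hqg.trans (hgd j)⟩
  have hI : (Ideal.span {q}).IsPrime := (Ideal.span_singleton_prime hq.ne_zero).2 hq
  let Q := MvPolynomial (Fin n) K ⧸ Ideal.span {q}
  have hker : ∀ a : MvPolynomial (Fin n) K, algebraMap _ (FractionRing Q) a = 0 ↔ q ∣ a := by
    intro a
    rw [IsScalarTower.algebraMap_apply _ Q (FractionRing Q),
      FaithfulSMul.algebraMap_eq_zero_iff, Ideal.Quotient.algebraMap_eq,
      Ideal.Quotient.eq_zero_iff_mem, Ideal.mem_span_singleton]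
  have : CharP (FractionRing Q) p := by
    have h0 : ((p : ℕ) : FractionRing Q) = 0 := by
      have := congrArg (algebraMap (MvPolynomial (Fin n) K) (FractionRing Q))
        (CharP.cast_eq_zero (MvPolynomial (Fin n) K) p)
      rwa [map_natCast, map_zero] at this
    exact (CharP.charP_iff_prime_eq_zero hpp).2 h0
  refine core (L := FractionRing Q) p hpp f h1 h2 q hq hqd hker ?_
  intro u
  obtain ⟨a, b, _, rfl⟩ := IsFractionRing.div_surjective (A := Q) u
  obtain ⟨a, rfl⟩ := Ideal.Quotient.mk_surjective a
  obtain ⟨b, rfl⟩ := Ideal.Quotient.mk_surjective b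
  exact ⟨a, b, rfl⟩
end

section
/- Let K be a UFD of characteristic p > 0, let A = K[x_1,…,x_n] be the polynomial algebra, B = K[x_1^p,…,x_n^p], and let f_1,…,f_m ∈ A with m ≥ 1. Set R_i = B[f_1,…,f_{i-1},f_{i+1},…,f_m] and, for i ≠ j, R_{ij} = B[f_1,…,f_m with f_i and f_j omitted]. Let g ∈ A be irreducible. Then g divides dgcd(f_1,…,f_m) (equivalently, g divides every m×m jacobian minor of f_1,…,f_m) if and only if at least one of the following holds: (i) g ∉ B and g² divides b·f_i + c for some i ∈ {1,…,m} and some b,c ∈ R_i with g ∤ b; (ii) g ∈ B and g divides b·f_i + c for some i ∈ {1,…,m} and some b,c ∈ R_i with g ∤ b; (iii) g divides b_1·f_i + c_1 and g divides b_2·f_j + c_2 for some i ≠ j in {1,…,m} and some b_1,b_2,c_1,c_2 ∈ R_{ij} with g ∤ b_1 and g ∤ b_2. -/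
open MvPolynomial

theorem fr_pow_mem {K : Type*} [CommRing K] {p : ℕ} (hp : p.Prime) [CharP K p] {n : ℕ}
    (a : MvPolynomial (Fin n) K) : a ^ p ∈ pPowers K n p := by
  have := Fact.mk hp
  induction a using MvPolynomial.induction_on with
  | C c =>
    rw [← map_pow]
    exact Subalgebra.algebraMap_mem (Algebra.adjoin K _) (c ^ p)
  | add a b ha hb =>
    rw [add_pow_char]
    exact add_mem ha hb
  | mul_X a i ha =>
    rw [mul_pow]
    exact mul_mem ha (Algebra.subset_adjoin ⟨i, rfl⟩)

theorem fr_pderiv_pPowers {K : Type*} [CommRing K] {p : ℕ} [CharP K p] {n : ℕ}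
    (a : MvPolynomial (Fin n) K) (ha : a ∈ pPowers K n p) (k : Fin n) : pderiv k a = 0 := by
  change a ∈ Algebra.adjoin K _ at ha
  induction ha using Algebra.adjoin_induction with
  | mem x hx =>
    obtain ⟨i, rfl⟩ := hx
    simp
  | algebraMap r => exact pderiv_C
  | add x y _ _ hx hy => simp [hx, hy]
  | mul x y _ _ hx hy => simp [hx, hy]

theorem fr_mem_pPowers {K : Type*} [CommRing K] [IsDomain K] {p : ℕ} [CharP K p] {n : ℕ}
    (a : MvPolynomial (Fin n) K) (ha : ∀ k, pderiv k a = 0) : a ∈ pPowers K n p := by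
  rw [a.as_sum]
  refine sum_mem fun s hs => ?_
  rw [monomial_eq]
  refine mul_mem (Subalgebra.algebraMap_mem (Algebra.adjoin K _) _) ?_
  refine prod_mem fun k _ => ?_
  have hd : p ∣ s k := by
    by_cases h0 : s k = 0
    · simp [h0]
    have h1 := congrArg (coeff (s - Finsupp.single k 1)) (ha k)
    have h2 : s - Finsupp.single k 1 + Finsupp.single k 1 = s :=
      tsub_add_cancel_of_le (by simpa using Nat.one_le_iff_ne_zero.2 h0)
    rw [coeff_pderiv, h2, coeff_zero, mul_eq_zero] at h1
    rcases h1 with h1 | h1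
    · exact absurd h1 (mem_support_iff.1 hs)
    · rw [← CharP.cast_eq_zero_iff K p]
      have h3 : (s - Finsupp.single k 1 : Fin n →₀ ℕ) k + 1 = s k := by
        simp; omega
      rw [← h3]
      exact_mod_cast h1
  obtain ⟨c, hc⟩ := hd
  change X k ^ (s k) ∈ _
  rw [hc, pow_mul]
  have hX : (X k : MvPolynomial (Fin n) K) ^ p ∈ pPowers K n p :=
    Algebra.subset_adjoin ⟨k, rfl⟩
  exact pow_mem hX c

theorem fr_exists_not_dvd {K : Type*} [CommRing K] [IsDomain K] {p : ℕ} [CharP K p] {n : ℕ}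
    (g : MvPolynomial (Fin n) K) (hg : g ∉ pPowers K n p) : ∃ k, ¬ g ∣ pderiv k g := by
  by_contra! hcon
  apply hg
  apply fr_mem_pPowers
  intro k
  by_contra h0
  obtain ⟨c, hc⟩ := hcon k
  have hc0 : c ≠ 0 := by rintro rfl; simp at hc; exact h0 hc
  have hg0 : g ≠ 0 := by rintro rfl; simp at h0
  have h1 : (pderiv k g).degreeOf k = g.degreeOf k + c.degreeOf k := by
    rw [hc, degreeOf_mul_eq hg0 hc0]
  have h2 : (pderiv k g).degreeOf k < g.degreeOf k := by
    have hle : ∀ s ∈ (pderiv k g).support, s k + 1 ≤ g.degreeOf k := by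
      intro s hs
      rw [mem_support_iff, coeff_pderiv] at hs
      have := monomial_le_degreeOf k (mem_support_iff.2 (left_ne_zero_of_mul hs))
      simpa using this
    obtain ⟨s, hs⟩ := support_nonempty.2 h0
    have := hle s hs
    rw [degreeOf_lt_iff (by omega)]
    intro s hs
    have := hle s hs
    omega
  omega

theorem fr_deriv_closure {K : Type*} [CommRing K] {p : ℕ} [CharP K p] {n m : ℕ}
    (f : Fin m → MvPolynomial (Fin n) K) (S : Set (Fin m)) (a : MvPolynomial (Fin n) K)
    (ha : a ∈ Subring.closure (↑(pPowers K n p) ∪ (f '' S))) :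
    ∃ e : Fin m → MvPolynomial (Fin n) K, (∀ l, l ∉ S → e l = 0) ∧
      ∀ k, pderiv k a = ∑ l, e l * pderiv k (f l) := by
  induction ha using Subring.closure_induction with
  | mem x hx =>
    rcases hx with hx | ⟨i, hi, rfl⟩
    · exact ⟨0, by simp, fun k => by simp [fr_pderiv_pPowers x hx k]⟩
    · refine ⟨Pi.single i 1, fun l hl => ?_, fun k => ?_⟩
      · rw [Pi.single_eq_of_ne]; rintro rfl; exact hl hi
      · simp [Pi.single_apply]
  | zero => exact ⟨0, by simp, by simp⟩
  | one => exact ⟨0, by simp, by simp⟩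
  | add x y _ _ hx hy =>
    obtain ⟨e, h1, h2⟩ := hx
    obtain ⟨e', h1', h2'⟩ := hy
    refine ⟨e + e', fun l hl => by simp [h1 l hl, h1' l hl], fun k => ?_⟩
    simp [h2, h2', add_mul, Finset.sum_add_distrib]
  | neg x _ hx =>
    obtain ⟨e, h1, h2⟩ := hx
    exact ⟨-e, fun l hl => by simp [h1 l hl], fun k => by simp [h2]⟩
  | mul x y _ _ hx hy =>
    obtain ⟨e, h1, h2⟩ := hx
    obtain ⟨e', h1', h2'⟩ := hy
    refine ⟨fun l => y * e l + x * e' l, fun l hl => by simp [h1 l hl, h1' l hl], fun k => ?_⟩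
    rw [pderiv_mul, h2, h2', Finset.mul_sum, Finset.sum_mul, ← Finset.sum_add_distrib]
    exact Finset.sum_congr rfl fun l _ => by ring

theorem fr_chain {K : Type*} [CommRing K] {p : ℕ} {n : ℕ} {L : Type*} [Field L]
    (φ : MvPolynomial (Fin n) K →+* L) (D : Derivation ℤ L L)
    (hD : ∀ b ∈ pPowers K n p, D (φ b) = 0) (a : MvPolynomial (Fin n) K) :
    D (φ a) = ∑ k, D (φ (X k)) * φ (pderiv k a) := by
  induction a using MvPolynomial.induction_on with
  | C c =>
    have h1 : D (φ (C c)) = 0 := hD _ (Subalgebra.algebraMap_mem (Algebra.adjoin K _) c)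
    simp [h1]
  | add a b ha hb => simp [ha, hb, mul_add, Finset.sum_add_distrib]
  | mul_X a i ha =>
    simp only [map_mul, Derivation.leibniz, ha, smul_eq_mul, map_add, pderiv_X]
    simp only [mul_add, Finset.sum_add_distrib, Finset.mul_sum, Pi.single_apply]
    congr 1
    · rw [Finset.sum_eq_single i]
      · simp; ring
      · intro b _ hb
        simp [hb.symm]
      · simp
    · exact Finset.sum_congr rfl fun l _ => by ring

theorem fr_dep {L : Type*} [Field L] {m n : ℕ} (M : Matrix (Fin m) (Fin n) L)
    (h : ∀ j : Fin m → Fin n, (Matrix.of fun i l => M i (j l)).det = 0) :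
    ∃ w : Fin m → L, w ≠ 0 ∧ ∀ k, ∑ l, w l * M l k = 0 := by
  by_contra! hcon
  have hli : LinearIndependent L M.row := by
    rw [Fintype.linearIndependent_iff]
    intro w hw
    by_contra! h0
    obtain ⟨i, hi⟩ := h0
    obtain ⟨k, hk⟩ := hcon w (fun h => hi (by simp [h]))
    apply hk
    simpa using congrFun hw k
  have hr : M.rank = m := by simpa using hli.rank_matrix
  rw [Matrix.rank_eq_finrank_span_cols] at hr
  have htop : Submodule.span L (Set.range M.col) = ⊤ :=
    Submodule.eq_top_of_finrank_eq (by simpa using hr)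
  obtain ⟨κ, a, -, hsp, hli'⟩ := exists_linearIndependent' L M.col
  rw [htop] at hsp
  let b := Module.Basis.mk hli' hsp.ge
  have hfin : Finite κ := hli'.finite
  have := Fintype.ofFinite κ
  have hcard : Fintype.card κ = Fintype.card (Fin m) := by
    rw [← Module.finrank_eq_card_basis b]; simp
  let e : Fin m ≃ κ := (Fintype.equivOfCardEq hcard).symm
  have hli2 := hli'.comp e e.injective
  have hu := (Matrix.linearIndependent_cols_iff_isUnit
    (A := Matrix.of fun i l => M i (a (e l)))).1 hli2
  rw [Matrix.isUnit_iff_isUnit_det] at hu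
  exact hu.ne_zero (h (a ∘ e))

theorem fr_exists_derivation {L : Type*} [Field L] (p : ℕ) (hp : p.Prime) [CharP L p]
    (E : Subfield L) (hE : ∀ x : L, x ^ p ∈ E) (a : L) (ha : a ∉ E) :
    ∃ D : Derivation ℤ L L, (∀ x ∈ E, D x = 0) ∧ D a = 1 := by
  obtain ⟨M, hEM, hM⟩ := zorn_le_nonempty₀ {S : Subfield L | E ≤ S ∧ a ∉ S} (by
    intro c hc hch y hy
    refine ⟨sSup c, ⟨(hc hy).1.trans (le_sSup hy), ?_⟩, fun z hz => le_sSup hz⟩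
    rw [Subfield.mem_sSup_of_directedOn ⟨y, hy⟩ hch.directedOn]
    rintro ⟨s, hs, has⟩
    exact (hc hs).2 has) E ⟨le_rfl, ha⟩
  have haM : a ∉ M := hM.prop.2
  have := Fact.mk hp
  have hMp : ∀ x : L, x ^ p ∈ M := fun x => hEM (hE x)
  have hdeg : ∀ y : L, y ∉ M → Module.finrank M (IntermediateField.adjoin M {y}) = p := by
    intro y hy
    have hirr : Irreducible (Polynomial.X ^ p - Polynomial.C (⟨y ^ p, hMp y⟩ : M)) := by
      apply X_pow_sub_C_irreducible_of_prime hp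
      intro b hb
      have hb' : (b : L) ^ p = y ^ p := by simpa using congrArg Subtype.val hb
      have : (b : L) = y := frobenius_inj L p (by simpa [frobenius_def] using hb')
      exact hy (this ▸ b.2)
    have hint : IsIntegral M y := ⟨Polynomial.X ^ p - Polynomial.C (⟨y ^ p, hMp y⟩ : M),
      Polynomial.monic_X_pow_sub_C _ hp.ne_zero, by simp; exact sub_self _⟩
    rw [IntermediateField.adjoin.finrank hint,
      ← minpoly.eq_of_irreducible_of_monic hirr (by simp; exact sub_self _)
        (Polynomial.monic_X_pow_sub_C _ hp.ne_zero), Polynomial.natDegree_X_pow_sub_C]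
  have htop : IntermediateField.adjoin M {a} = ⊤ := by
    rw [eq_top_iff]
    intro y _
    by_cases hy : y ∈ M
    · exact (IntermediateField.adjoin M {a}).algebraMap_mem ⟨y, hy⟩
    have hay : a ∈ IntermediateField.adjoin M {y} := by
      by_contra hcon
      have h1 : M ≤ (IntermediateField.adjoin M {y}).toSubfield := fun z hz =>
        (IntermediateField.adjoin M {y}).algebraMap_mem ⟨z, hz⟩
      have := hM.le_of_ge (y := (IntermediateField.adjoin M {y}).toSubfield)
        ⟨hEM.trans h1, hcon⟩ h1
      exact hy (this (IntermediateField.mem_adjoin_simple_self M y))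
    have hle : IntermediateField.adjoin M {a} ≤ IntermediateField.adjoin M {y} := by
      rw [IntermediateField.adjoin_simple_le_iff]; exact hay
    have : FiniteDimensional M (IntermediateField.adjoin M {y}) :=
      FiniteDimensional.of_finrank_pos (by rw [hdeg y hy]; exact hp.pos)
    have := IntermediateField.eq_of_le_of_finrank_eq hle (by rw [hdeg y hy, hdeg a haM])
    rw [this]
    exact IntermediateField.mem_adjoin_simple_self M y
  have : Algebra.EssFiniteType M L := by
    have h1 : Module.finrank M L = p := by
      rw [← IntermediateField.finrank_top', ← htop, hdeg a haM]
    have : FiniteDimensional M L := FiniteDimensional.of_finrank_pos (by rw [h1]; exact hp.pos)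
    infer_instance
  have : IsPurelyInseparable M L := by
    have : CharP M p := inferInstance
    rw [isPurelyInseparable_iff_pow_mem M p]
    exact fun x => ⟨1, ⟨⟨x ^ p, hMp x⟩, by simp; rfl⟩⟩
  have hDa : KaehlerDifferential.D M L a ≠ 0 := by
    intro h0
    have hall : ∀ y : L, KaehlerDifferential.D M L y = 0 := by
      intro y
      have hy : y ∈ IntermediateField.adjoin M {a} := htop ▸ IntermediateField.mem_top
      induction hy using IntermediateField.adjoin_induction with
      | mem x hx => rw [Set.mem_singleton_iff.1 hx, h0]
      | algebraMap x => simp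
      | add x y _ _ hx hy => simp [hx, hy]
      | inv x _ hx => rw [Derivation.leibniz_inv]; simp [hx]
      | mul x y _ _ hx hy => simp [hx, hy]
    have hsub : Subsingleton (Ω[L⁄M]) := by
      rw [← Submodule.subsingleton_iff L, ← subsingleton_iff_bot_eq_top.trans Iff.rfl]
      rw [← KaehlerDifferential.span_range_derivation]
      symm
      rw [Submodule.span_eq_bot]
      rintro _ ⟨y, rfl⟩
      exact hall y
    have : Algebra.FormallyUnramified M L := ⟨hsub⟩
    have := Algebra.FormallyUnramified.range_eq_top_of_isPurelyInseparable M L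
    have h2 : a ∈ (algebraMap M L).range := this ▸ trivial
    obtain ⟨z, hz⟩ := h2
    exact haM (hz ▸ z.2)
  have hex : ∃ l : Module.Dual L (Ω[L⁄M]), l (KaehlerDifferential.D M L a) ≠ 0 := by
    by_contra hcon
    push Not at hcon
    exact hDa ((Module.forall_dual_apply_eq_zero_iff L _).1 hcon)
  obtain ⟨l, hl⟩ := hex
  refine ⟨(((l (KaehlerDifferential.D M L a))⁻¹ • l).compDer
    (KaehlerDifferential.D M L)).restrictScalars ℤ, ?_, ?_⟩
  · intro x hx
    have : KaehlerDifferential.D M L x = 0 :=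
      (KaehlerDifferential.D M L).map_algebraMap (⟨x, hEM hx⟩ : M)
    simp [this]
  · simp [hl]

theorem fr_mem_field {K : Type*} [CommRing K] {p : ℕ} {n m : ℕ} {L : Type*} [Field L]
    (φ : MvPolynomial (Fin n) K →+* L) (g : MvPolynomial (Fin n) K)
    (hg : ∀ a, φ a = 0 ↔ g ∣ a)
    (f : Fin m → MvPolynomial (Fin n) K) (T : Set (Fin m)) (i : Fin m)
    (h : φ (f i) ∈ Subfield.closure (φ '' (↑(pPowers K n p) ∪ (f '' T)))) :
    ∃ b c, b ∈ Subring.closure (↑(pPowers K n p) ∪ (f '' T)) ∧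
      c ∈ Subring.closure (↑(pPowers K n p) ∪ (f '' T)) ∧ ¬ g ∣ b ∧ g ∣ b * f i + c := by
  rw [Subfield.mem_closure_iff] at h
  obtain ⟨y, hy, z, hz, h⟩ := h
  rw [← RingHom.map_closure] at hy hz
  obtain ⟨c, hc, rfl⟩ := hy
  obtain ⟨b, hb, rfl⟩ := hz
  by_cases h0 : φ b = 0
  · refine ⟨1, 0, one_mem _, zero_mem _, ?_, ?_⟩
    · rw [← hg]; simp
    · rw [← hg]; simp [← h, h0]
  · refine ⟨b, -c, hb, neg_mem hc, ?_, ?_⟩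
    · rwa [← hg]
    · rw [← hg, map_add, map_mul, ← h]; field_simp; simp

/-- From a congruence `b f_i + c = g h` with `b, c` in the ring generated by `B` and the `f_l`,
`l ∈ T`, get a relation among the differentials. -/
theorem fr_relation {K : Type*} [CommRing K] {p : ℕ} [CharP K p] {n m : ℕ} {L : Type*} [Field L]
    (φ : MvPolynomial (Fin n) K →+* L) (g : MvPolynomial (Fin n) K) (hg : φ g = 0)
    (f : Fin m → MvPolynomial (Fin n) K) (T : Set (Fin m)) (i : Fin m) (hi : i ∉ T)
    (b c h : MvPolynomial (Fin n) K)
    (hb : b ∈ Subring.closure (↑(pPowers K n p) ∪ (f '' T)))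
    (hc : c ∈ Subring.closure (↑(pPowers K n p) ∪ (f '' T)))
    (hh : b * f i + c = g * h) :
    ∃ e : Fin m → L, e i = φ b ∧ (∀ l, l ∉ T → l ≠ i → e l = 0) ∧
      ∀ k, ∑ l, e l * φ (pderiv k (f l)) = φ h * φ (pderiv k g) := by
  obtain ⟨eb, heb, heb'⟩ := fr_deriv_closure f _ b hb
  obtain ⟨ec, hec, hec'⟩ := fr_deriv_closure f _ c hc
  refine ⟨fun l => (if l = i then φ b else 0) + φ (eb l) * φ (f i) + φ (ec l), ?_, ?_, ?_⟩
  · simp [heb i hi, hec i hi]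
  · intro l hl hli
    simp [heb l hl, hec l hl, hli]
  · intro k
    have h1 := congrArg (fun x => φ (pderiv k x)) hh
    simp only [map_add, pderiv_mul, map_mul, heb', hec', hg, map_sum] at h1
    simp only [add_mul, Finset.sum_add_distrib, ite_mul, zero_mul, Finset.sum_ite_eq',
      Finset.mem_univ, if_true]
    rw [Finset.sum_mul] at h1
    have h2 : ∑ l, φ (eb l) * φ (f i) * φ (pderiv k (f l))
        = ∑ l, φ (eb l) * φ (pderiv k (f l)) * φ (f i) :=
      Finset.sum_congr rfl fun l _ => by ring
    rw [h2]
    linear_combination h1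

theorem fr_main_dep {K : Type*} [CommRing K] [IsDomain K]
    {p : ℕ} (hp : p.Prime) [CharP K p] {n m : ℕ} {L : Type*} [Field L]
    (φ : MvPolynomial (Fin n) K →+* L) (g : MvPolynomial (Fin n) K)
    (hg : ∀ a, φ a = 0 ↔ g ∣ a)
    (hLp : ∀ x : L, x ^ p ∈ Subfield.closure (φ '' (pPowers K n p : Set _)))
    (f : Fin m → MvPolynomial (Fin n) K)
    (w : Fin m → L) (hw0 : w ≠ 0) (hw : ∀ k, ∑ l, w l * φ (pderiv k (f l)) = 0) :
      ((g ∉ pPowers K n p ∧ ∃ i : Fin m, ∃ b c : MvPolynomial (Fin n) K,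
          b ∈ Ri K p f i ∧ c ∈ Ri K p f i ∧ ¬ g ∣ b ∧ g ^ 2 ∣ b * f i + c) ∨
       (g ∈ pPowers K n p ∧ ∃ i : Fin m, ∃ b c : MvPolynomial (Fin n) K,
          b ∈ Ri K p f i ∧ c ∈ Ri K p f i ∧ ¬ g ∣ b ∧ g ∣ b * f i + c) ∨
       (∃ i j : Fin m, i ≠ j ∧ ∃ b₁ b₂ c₁ c₂ : MvPolynomial (Fin n) K,
          b₁ ∈ Rij K p f i j ∧ b₂ ∈ Rij K p f i j ∧
          c₁ ∈ Rij K p f i j ∧ c₂ ∈ Rij K p f i j ∧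
          ¬ g ∣ b₁ ∧ ¬ g ∣ b₂ ∧ g ∣ b₁ * f i + c₁ ∧ g ∣ b₂ * f j + c₂)) := by
  have hCh : CharP L p := by
    have := Fact.mk hp
    exact CharP.of_ringHom_of_ne_zero (φ.comp C) p hp.ne_zero
  -- derivations
  have hder : ∀ (T : Set (Fin m)) (i : Fin m),
      φ (f i) ∉ Subfield.closure (φ '' (↑(pPowers K n p) ∪ (f '' T))) →
      ∃ D : Derivation ℤ L L, (∀ b ∈ pPowers K n p, D (φ b) = 0) ∧
        (∀ l ∈ T, D (φ (f l)) = 0) ∧ D (φ (f i)) = 1 := by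
    intro T i hi
    obtain ⟨D, h1, h2⟩ := fr_exists_derivation p hp _ (fun x =>
      Subfield.closure_mono (Set.image_mono Set.subset_union_left) (hLp x)) _ hi
    exact ⟨D, fun b hb => h1 _ (Subfield.subset_closure ⟨b, Or.inl hb, rfl⟩),
      fun l hl => h1 _ (Subfield.subset_closure ⟨f l, Or.inr ⟨l, hl, rfl⟩, rfl⟩), h2⟩
  -- applying a derivation to the relation
  have hrel : ∀ (e : Fin m → L) (v : Fin n → L) (D : Derivation ℤ L L),
      (∀ b ∈ pPowers K n p, D (φ b) = 0) →
      (∀ k, ∑ l, e l * φ (pderiv k (f l)) = v k) →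
      ∑ l, e l * D (φ (f l)) = ∑ k, D (φ (X k)) * v k := by
    intro e v D hD h
    simp_rw [fr_chain φ D hD (f _), ← h, Finset.mul_sum]
    rw [Finset.sum_comm]
    exact Finset.sum_congr rfl fun k _ => Finset.sum_congr rfl fun l _ => by ring
  have hex : ∃ i, φ (f i) ∈ Subfield.closure (φ '' (↑(pPowers K n p) ∪ (f '' {j | j ≠ i}))) := by
    by_contra! hcon
    apply hw0
    funext i
    obtain ⟨D, h1, h2, h3⟩ := hder _ i (hcon i)
    have := hrel w 0 D h1 hw
    rw [Finset.sum_eq_single i (fun l _ hl => by rw [h2 l hl, mul_zero]) (by simp), h3] at this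
    simpa using this
  obtain ⟨i, hi⟩ := hex
  obtain ⟨b, c, hb, hc, hgb, hdvd⟩ := fr_mem_field φ g hg f _ i hi
  by_cases hgB : g ∈ pPowers K n p
  · exact Or.inr (Or.inl ⟨hgB, i, b, c, hb, hc, hgb, hdvd⟩)
  by_cases h3 : ∃ j, j ≠ i ∧
      φ (f j) ∈ Subfield.closure (φ '' (↑(pPowers K n p) ∪ (f '' {l | l ≠ i ∧ l ≠ j})))
  · obtain ⟨j, hji, hj⟩ := h3
    have hi' : φ (f i) ∈
        Subfield.closure (φ '' (↑(pPowers K n p) ∪ (f '' {l | l ≠ i ∧ l ≠ j}))) := by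
      refine Subfield.closure_le.2 ?_ hi
      rintro _ ⟨x, hx | ⟨l, hl, rfl⟩, rfl⟩
      · exact Subfield.subset_closure ⟨x, Or.inl hx, rfl⟩
      · by_cases hlj : l = j
        · rw [hlj]; exact hj
        · exact Subfield.subset_closure ⟨f l, Or.inr ⟨l, ⟨hl, hlj⟩, rfl⟩, rfl⟩
    obtain ⟨b₁, c₁, hb₁, hc₁, hgb₁, hd₁⟩ := fr_mem_field φ g hg f _ i hi'
    obtain ⟨b₂, c₂, hb₂, hc₂, hgb₂, hd₂⟩ := fr_mem_field φ g hg f _ j hj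
    exact Or.inr (Or.inr ⟨i, j, hji.symm, b₁, b₂, c₁, c₂, hb₁, hb₂, hc₁, hc₂, hgb₁, hgb₂,
      hd₁, hd₂⟩)
  push Not at h3
  refine Or.inl ⟨hgB, i, b, c, hb, hc, hgb, ?_⟩
  obtain ⟨h, hh⟩ := hdvd
  suffices hs : φ h = 0 by
    obtain ⟨q, rfl⟩ := (hg h).1 hs
    exact ⟨q, by rw [hh]; ring⟩
  have hφg : φ g = 0 := (hg g).2 dvd_rfl
  obtain ⟨e, hei, -, he⟩ := fr_relation φ g hφg f _ i (by simp) b c h hb hc hh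
  -- for each j different from i, both relations have proportional coefficients
  have key : ∀ j, j ≠ i → ∃ d : L, w j + w i * d = 0 ∧ e j + e i * d = 0 := by
    intro j hj
    obtain ⟨D, h1, h2, h4⟩ := hder _ j (h3 j hj)
    refine ⟨D (φ (f i)), ?_⟩
    have hsum : ∀ u : Fin m → L, ∑ l, u l * D (φ (f l)) = u j + u i * D (φ (f i)) := by
      intro u
      rw [← Finset.sum_subset (Finset.subset_univ {j, i}), Finset.sum_pair hj, h4, mul_one]
      intro l _ hl
      simp only [Finset.mem_insert, Finset.mem_singleton, not_or] at hl
      rw [h2 l ⟨hl.2, hl.1⟩, mul_zero]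
    have hDg : ∑ k, D (φ (X k)) * φ (pderiv k g) = 0 := by
      rw [← fr_chain φ D h1 g, hφg, map_zero]
    constructor
    · rw [← hsum, hrel w 0 D h1 hw]; simp
    · rw [← hsum, hrel e _ D h1 he]
      have : ∑ k, D (φ (X k)) * (φ h * φ (pderiv k g))
          = φ h * ∑ k, D (φ (X k)) * φ (pderiv k g) := by
        rw [Finset.mul_sum]; exact Finset.sum_congr rfl fun k _ => by ring
      rw [this, hDg, mul_zero]
  have hwi : w i ≠ 0 := by
    intro h0
    apply hw0
    funext j
    by_cases hj : j = i
    · rw [hj, h0]; rfl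
    · obtain ⟨d, hd, -⟩ := key j hj
      simpa [h0] using hd
  have hprop : ∀ j, w i * e j = e i * w j := by
    intro j
    by_cases hj : j = i
    · rw [hj]; ring
    · obtain ⟨d, hd, hd'⟩ := key j hj
      linear_combination w i * hd' - e i * hd
  obtain ⟨k, hk⟩ := fr_exists_not_dvd (p := p) g hgB
  have h5 : w i * (φ h * φ (pderiv k g)) = 0 := by
    rw [← he, Finset.mul_sum]
    have : ∀ l, w i * (e l * φ (pderiv k (f l))) = e i * (w l * φ (pderiv k (f l))) := by
      intro l; linear_combination φ (pderiv k (f l)) * hprop l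
    simp_rw [this]
    rw [← Finset.mul_sum, hw, mul_zero]
  have h6 : φ (pderiv k g) ≠ 0 := fun h => hk ((hg _).1 h)
  rcases mul_eq_zero.1 h5 with h7 | h7
  · exact absurd h7 hwi
  · exact (mul_eq_zero.1 h7).resolve_right h6

/-- **Freudenburg's lemma in positive characteristic for `m` polynomials (Theorem 1).**
An irreducible `g` divides `dgcd(f₁,…,f_m)` (i.e. divides every `m×m` jacobian minor) iff
one of the conditions (i)–(iii) on factors holds. -/
theorem irreducible_dvd_dgcd_iff
    {K : Type*} [CommRing K] [IsDomain K] [UniqueFactorizationMonoid K]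
    (p : ℕ) (hp : 0 < p) [CharP K p] {n m : ℕ} (hm : 1 ≤ m)
    (f : Fin m → MvPolynomial (Fin n) K)
    (g : MvPolynomial (Fin n) K) (hg : Irreducible g) :
    (∀ j : Fin m → Fin n, g ∣ jacMinor f j) ↔
      -- (i)
      ((g ∉ pPowers K n p ∧ ∃ i : Fin m, ∃ b c : MvPolynomial (Fin n) K,
          b ∈ Ri K p f i ∧ c ∈ Ri K p f i ∧ ¬ g ∣ b ∧ g ^ 2 ∣ b * f i + c) ∨
      -- (ii)
       (g ∈ pPowers K n p ∧ ∃ i : Fin m, ∃ b c : MvPolynomial (Fin n) K,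
          b ∈ Ri K p f i ∧ c ∈ Ri K p f i ∧ ¬ g ∣ b ∧ g ∣ b * f i + c) ∨
      -- (iii)
       (∃ i j : Fin m, i ≠ j ∧ ∃ b₁ b₂ c₁ c₂ : MvPolynomial (Fin n) K,
          b₁ ∈ Rij K p f i j ∧ b₂ ∈ Rij K p f i j ∧
          c₁ ∈ Rij K p f i j ∧ c₂ ∈ Rij K p f i j ∧
          ¬ g ∣ b₁ ∧ ¬ g ∣ b₂ ∧ g ∣ b₁ * f i + c₁ ∧ g ∣ b₂ * f j + c₂)) := by
  classical
  have hpp : p.Prime := (CharP.char_is_prime_or_zero K p).resolve_right hp.ne'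
  have hgp : Prime g := hg.prime
  have hI : (Ideal.span {g}).IsPrime := (Ideal.span_singleton_prime hgp.ne_zero).2 hgp
  let φ : MvPolynomial (Fin n) K →+* FractionRing (MvPolynomial (Fin n) K ⧸ Ideal.span {g}) :=
    (algebraMap _ _).comp (Ideal.Quotient.mk (Ideal.span {g}))
  have hφ : ∀ a, φ a = 0 ↔ g ∣ a := by
    intro a
    rw [← Ideal.mem_span_singleton, ← Ideal.Quotient.eq_zero_iff_mem]
    exact FaithfulSMul.algebraMap_eq_zero_iff (MvPolynomial (Fin n) K ⧸ Ideal.span {g})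
      (FractionRing (MvPolynomial (Fin n) K ⧸ Ideal.span {g}))
  have hφg : φ g = 0 := (hφ g).2 dvd_rfl
  have hLp : ∀ x, x ^ p ∈ Subfield.closure (φ '' (pPowers K n p : Set _)) := by
    intro x
    obtain ⟨y, z, -, rfl⟩ := IsFractionRing.div_surjective
      (MvPolynomial (Fin n) K ⧸ Ideal.span {g}) x
    obtain ⟨y, rfl⟩ := Ideal.Quotient.mk_surjective y
    obtain ⟨z, rfl⟩ := Ideal.Quotient.mk_surjective z
    have hm : ∀ a, φ a ^ p ∈ Subfield.closure (φ '' (pPowers K n p : Set _)) := fun a =>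
      Subfield.subset_closure ⟨a ^ p, fr_pow_mem hpp a, map_pow φ a p⟩
    rw [div_pow]
    exact div_mem (hm y) (hm z)
  have hjac : ∀ j : Fin m → Fin n, φ (jacMinor f j) =
      (Matrix.of fun i l => φ (pderiv (j l) (f i))).det := by
    intro j
    rw [jacMinor, RingHom.map_det]
    rfl
  constructor
  · intro hd
    obtain ⟨w, hw0, hw⟩ := fr_dep (Matrix.of fun i k => φ (pderiv k (f i))) (fun j => by
      have := (hφ _).2 (hd j)
      rw [hjac] at this
      exact this)
    exact fr_main_dep hpp φ g hφ hLp f w hw0 hw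
  · intro hcases
    suffices hs : ∃ w : Fin m → FractionRing (MvPolynomial (Fin n) K ⧸ Ideal.span {g}),
        w ≠ 0 ∧ ∀ k, ∑ l, w l * φ (pderiv k (f l)) = 0 by
      obtain ⟨w, hw0, hw⟩ := hs
      intro j
      rw [← hφ, hjac, ← Matrix.exists_vecMul_eq_zero_iff]
      exact ⟨w, hw0, _root_.funext fun l => hw (j l)⟩
    have hne : ∀ b, ¬ g ∣ b → φ b ≠ 0 := fun b hb h => hb ((hφ b).1 h)
    rcases hcases with ⟨-, i, b, c, hb, hc, hgb, q, hq⟩ | ⟨hgB, i, b, c, hb, hc, hgb, q, hq⟩ |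
      ⟨i, j, hij, b₁, b₂, c₁, c₂, hb₁, hb₂, hc₁, hc₂, hgb₁, hgb₂, ⟨q₁, hq₁⟩, ⟨q₂, hq₂⟩⟩
    · obtain ⟨e, hei, -, he⟩ := fr_relation φ g hφg f _ i (by simp) b c (g * q) hb hc
        (by rw [hq]; ring)
      refine ⟨e, fun h => hne b hgb (by rw [← hei, h]; rfl), fun k => ?_⟩
      rw [he, map_mul, hφg]; ring
    · obtain ⟨e, hei, -, he⟩ := fr_relation φ g hφg f _ i (by simp) b c q hb hc hq
      refine ⟨e, fun h => hne b hgb (by rw [← hei, h]; rfl), fun k => ?_⟩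
      rw [he, fr_pderiv_pPowers g hgB k]; simp
    · obtain ⟨e₁, hi₁, h0₁, he₁⟩ := fr_relation φ g hφg f _ i (by simp) b₁ c₁ q₁ hb₁ hc₁ hq₁
      obtain ⟨e₂, hi₂, h0₂, he₂⟩ := fr_relation φ g hφg f _ j (by simp) b₂ c₂ q₂ hb₂ hc₂ hq₂
      by_cases hq0 : φ q₁ = 0
      · refine ⟨e₁, fun h => hne b₁ hgb₁ (by rw [← hi₁, h]; rfl), fun k => ?_⟩
        rw [he₁, hq0, zero_mul]
      · refine ⟨fun l => φ q₂ * e₁ l - φ q₁ * e₂ l, fun h => ?_, fun k => ?_⟩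
        · have h1 := congrFun h j
          simp only [h0₁ j (by simp) hij.symm, hi₂] at h1
          have h2 : φ q₁ * φ b₂ = 0 := by simpa using h1
          exact (mul_ne_zero hq0 (hne b₂ hgb₂)) h2
        · simp only [sub_mul, mul_assoc, Finset.sum_sub_distrib, ← Finset.mul_sum, he₁, he₂]
          ring
end
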